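/- arXiv:2603.28808 — 2 statements merged into one kernel-verified Lean document; each statement's English description precedes it below -/
import Mathlib

section
/- Assuming the Riemann Hypothesis, for every complex number s with Re(s) > 1/2 such that s - 1 does not lie on the nonpositive real axis (i.e., s is not a real number in (1/2, 1]), the Riemann zeta function satisfies ζ(s) = lim_{x → ∞} exp(E₁((s-1)·log x)) · ∏_{p ≤ x, p prime} (1 - p^{-s})^{-1}, where the product runs over all primes p ≤ x and the limit is taken as the real parameter x tends to infinity. -/
open Filter

/-- The exponential integral `E₁(z) = -γ - log z - ∑_{k=1}^∞ (-z)^k / (k·k!)`. -/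
noncomputable def expIntegralE1 (z : ℂ) : ℂ :=
  -(Real.eulerMascheroniConstant : ℂ) - Complex.log z -
    ∑' k : ℕ, (-z) ^ (k + 1) / (((k + 1) * Nat.factorial (k + 1) : ℕ) : ℂ)

open Complex MeasureTheory Set in
lemma EP.mellin_tail {f : ℝ → ℂ} (hfm : Measurable f) {c C a : ℝ} (hc : 0 < c)
    (hfb : ∀ t, c < t → ‖f t‖ ≤ C * t ^ a) {s : ℂ} (hs : a < s.re) :
    IntegrableOn (fun t : ℝ => f t * (t : ℂ) ^ (-(s + 1))) (Ioi c) ∧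
    DifferentiableAt ℂ (fun s : ℂ => ∫ t in Ioi c, f t * (t : ℂ) ^ (-(s + 1))) s := by
  set g : ℝ → ℂ := (Ioi c).indicator f with hg
  have hgm : Measurable g := hfm.indicator measurableSet_Ioi
  have hC : 0 ≤ C := by
    have h1 := (norm_nonneg _).trans (hfb (c + 1) (by linarith))
    have : 0 < (c + 1) ^ a := Real.rpow_pos_of_pos (by linarith) a
    exact nonneg_of_mul_nonneg_left h1 this
  have hgb : ∀ t, 0 < t → ‖g t‖ ≤ C * t ^ a := by
    intro t ht
    simp only [hg, indicator]
    split_ifs with h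
    · exact hfb t h
    · simp only [norm_zero]; positivity
  have hli : LocallyIntegrableOn g (Ioi 0) := by
    have : LocallyIntegrableOn (fun t : ℝ => C * t ^ a) (Ioi 0) := by
      apply ContinuousOn.locallyIntegrableOn _ measurableSet_Ioi
      intro t ht
      exact ((Real.continuousAt_rpow_const t a (Or.inl (ne_of_gt ht))).const_mul C).continuousWithinAt
    refine this.mono hgm.aestronglyMeasurable ?_
    refine Eventually.of_forall fun t => ?_
    rcases le_or_gt t 0 with h | h
    · have : t ∉ Ioi c := by simp; linarith
      simp [hg, this]
      positivity
    · exact (hgb t h).trans (le_abs_self _)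
  have htop : g =O[atTop] (fun t : ℝ => t ^ (-(-a))) := by
    rw [neg_neg]
    refine Asymptotics.IsBigO.of_bound C ?_
    filter_upwards [eventually_gt_atTop 0] with t ht
    rw [Real.norm_of_nonneg (Real.rpow_nonneg ht.le _)]
    exact hgb t ht
  have hbot : g =O[nhdsWithin 0 (Ioi 0)] (fun t : ℝ => t ^ (-(-s.re - 1))) := by
    refine Asymptotics.IsBigO.of_bound 0 ?_
    have : Iio c ∈ nhds (0:ℝ) := Iio_mem_nhds hc
    filter_upwards [mem_nhdsWithin_of_mem_nhds this] with t ht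
    have : t ∉ Ioi c := by simp at ht ⊢; linarith
    simp [hg, this]
  have e : ∀ s : ℂ, (fun t : ℝ => (t : ℂ) ^ (-s - 1) • g t) =
      (Ioi c).indicator (fun t : ℝ => f t * (t : ℂ) ^ (-(s + 1))) := by
    intro s
    ext t
    simp only [hg, indicator]
    split_ifs
    · rw [smul_eq_mul, mul_comm]; congr 2; ring
    · simp
  have hsub : Ioi c ⊆ Ioi (0:ℝ) := Ioi_subset_Ioi hc.le
  constructor
  · have := mellinConvergent_of_isBigO_rpow hli htop (s := -s) (by simpa using hs) hbot (by simp)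
    rw [MellinConvergent, e] at this
    have h2 := this.mono_set hsub
    exact h2.congr_fun (fun t ht => by simp [indicator, mem_Ioi.1 ht]) measurableSet_Ioi
  · have := mellin_differentiableAt_of_isBigO_rpow hli htop (s := -s) (by simpa using hs) hbot (by simp)
    have h2 : DifferentiableAt ℂ (fun s : ℂ => mellin g (-s)) s :=
      DifferentiableAt.fun_comp' s this (by fun_prop)
    refine h2.congr_of_eventuallyEq (Eventually.of_forall fun z => ?_)
    simp only [mellin]
    rw [e, setIntegral_indicator measurableSet_Ioi, inter_eq_self_of_subset_right hsub]

open Complex MeasureTheory Set in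
lemma EP.zeta1_eq_integral {s : ℂ} (hs : 0 < s.re) :
    riemannZeta₁ s = s - (s - 1) * (s * ∫ t in Ioi (1 : ℝ), ((Int.fract t : ℝ) : ℂ) * (t : ℂ) ^ (-(s + 1))) := by
  have hfm : Measurable (fun t : ℝ => ((Int.fract t : ℝ) : ℂ)) := by fun_prop
  have hfb : ∀ t : ℝ, 1 < t → ‖((Int.fract t : ℝ) : ℂ)‖ ≤ 1 * t ^ (0:ℝ) := by
    intro t _
    rw [Complex.norm_real, Real.norm_eq_abs, abs_of_nonneg (Int.fract_nonneg t)]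
    simpa using (Int.fract_lt_one t).le
  set U : Set ℂ := {s | 0 < s.re} with hU
  have hUo : IsOpen U := isOpen_lt continuous_const continuous_re
  have hUc : IsPreconnected U := (convex_halfSpace_re_gt 0).isPreconnected
  have h1 : AnalyticOnNhd ℂ riemannZeta₁ U :=
    (differentiable_riemannZeta₁.differentiableOn).analyticOnNhd hUo
  have h2 : AnalyticOnNhd ℂ (fun s : ℂ => s - (s - 1) * (s * ∫ t in Ioi (1 : ℝ), ((Int.fract t : ℝ) : ℂ) * (t : ℂ) ^ (-(s + 1)))) U := by
    apply DifferentiableOn.analyticOnNhd _ hUo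
    intro s hs
    have := (EP.mellin_tail hfm one_pos hfb (s := s) hs).2
    apply DifferentiableAt.differentiableWithinAt
    fun_prop
  refine h1.eqOn_of_preconnected_of_eventuallyEq h2 hUc (z₀ := 2) (by simp [hU]) ?_ hs
  have : {s : ℂ | 1 < s.re} ∈ nhds (2:ℂ) :=
    (isOpen_lt continuous_const continuous_re).mem_nhds (by simp)
  filter_upwards [this] with s (hs : 1 < s.re)
  have hs1 : s ≠ 1 := by rintro rfl; simp at hs
  have hs0 : s - 1 ≠ 0 := sub_ne_zero.2 hs1
  have hz := riemannZeta_eq_inv_sub_mul hs1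
  have hL := LSeries_eq_mul_integral (1 : ℕ → ℂ) zero_le_one hs (LSeriesSummable_one_iff.2 hs)
    (by
      simp only [Pi.one_apply, Finset.sum_const, Nat.card_Icc, Real.rpow_one]
      refine Asymptotics.isBigO_of_le _ (fun n => by simp))
  rw [LSeries_one_eq_riemannZeta hs, hz] at hL
  have hIntg := (EP.mellin_tail hfm one_pos hfb (s := s) (by linarith)).1
  have hIntg2 := (EP.mellin_tail (f := fun t : ℝ => (t : ℂ)) (C := 1) (a := 1) (by fun_prop) one_pos
    (by intro t ht; simp [abs_of_pos (one_pos.trans ht)]) hs).1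
  have e2 : ∫ t in Ioi (1:ℝ), (t : ℂ) * (t : ℂ) ^ (-(s + 1)) = 1 / (s - 1) := by
    rw [setIntegral_congr_fun (g := fun t : ℝ => (t : ℂ) ^ (-s)) measurableSet_Ioi,
      integral_Ioi_cpow_of_lt (by simpa using hs) one_pos]
    · simp only [ofReal_one, one_cpow]
      rw [neg_div, ← div_neg]; congr 1; ring
    · intro t ht
      have : (t : ℂ) ≠ 0 := by simpa using (one_pos.trans ht).ne'
      simp only
      rw [show -(s + 1) = -s - 1 by ring, cpow_sub _ _ this, cpow_one]
      field_simp
  have e3 : ∫ t in Ioi (1:ℝ), (∑ k ∈ Finset.Icc 1 ⌊t⌋₊, (1 : ℕ → ℂ) k) * (t : ℂ) ^ (-(s + 1)) =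
      1 / (s - 1) - ∫ t in Ioi (1 : ℝ), ((Int.fract t : ℝ) : ℂ) * (t : ℂ) ^ (-(s + 1)) := by
    rw [← e2, ← integral_sub hIntg2 hIntg]
    refine setIntegral_congr_fun measurableSet_Ioi fun t ht => ?_
    have ht0 : 0 ≤ t := (one_pos.trans ht).le
    simp only [Pi.one_apply, Finset.sum_const, Nat.card_Icc]
    rw [← sub_mul, ← Complex.ofReal_sub, Int.self_sub_fract, ← natCast_floor_eq_intCast_floor ht0]
    simp
  rw [e3] at hL
  field_simp at hL
  linear_combination hL

open Complex MeasureTheory Set in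
/-- Polynomial growth of `(s-1)ζ(s)` on `Re s ≥ 1/2`. -/
lemma EP.zeta1_growth {s : ℂ} (hs : 1 / 2 ≤ s.re) : ‖riemannZeta₁ s‖ ≤ 3 * (1 + ‖s‖) ^ 2 := by
  have hs0 : 0 < s.re := by linarith
  have hI : ‖∫ t in Ioi (1 : ℝ), ((Int.fract t : ℝ) : ℂ) * (t : ℂ) ^ (-(s + 1))‖ ≤ 2 := by
    have h1 : ∫ t in Ioi (1:ℝ), t ^ (-(s.re + 1)) = 1 / s.re := by
      rw [integral_Ioi_rpow_of_lt (by linarith) one_pos]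
      simp
    refine (norm_integral_le_of_norm_le (integrableOn_Ioi_rpow_of_lt (by linarith : -(s.re + 1) < -1) one_pos) ?_).trans ?_
    · refine (ae_restrict_iff' measurableSet_Ioi).2 (Eventually.of_forall fun t ht => ?_)
      have ht0 : 0 < t := one_pos.trans ht
      rw [norm_mul, norm_cpow_eq_rpow_re_of_pos ht0, Complex.norm_real, Real.norm_eq_abs,
        abs_of_nonneg (Int.fract_nonneg t)]
      have := (Int.fract_lt_one t).le
      have h2 : 0 ≤ t ^ (-(s.re + 1)) := Real.rpow_nonneg ht0.le _
      simp only [neg_re, add_re, one_re]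
      nlinarith
    · rw [h1, div_le_iff₀ hs0]; linarith
  rw [EP.zeta1_eq_integral hs0]
  set J := ∫ t in Ioi (1 : ℝ), ((Int.fract t : ℝ) : ℂ) * (t : ℂ) ^ (-(s + 1))
  have h3 : ‖s - 1‖ ≤ ‖s‖ + 1 := by simpa using norm_sub_le s 1
  calc ‖s - (s - 1) * (s * J)‖ ≤ ‖s‖ + ‖s - 1‖ * (‖s‖ * ‖J‖) := by
        refine (norm_sub_le _ _).trans ?_
        rw [norm_mul, norm_mul]
    _ ≤ ‖s‖ + (‖s‖ + 1) * (‖s‖ * 2) := by gcongr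
    _ ≤ _ := by nlinarith [norm_nonneg s]

open Complex Set LSeries.notation ArithmeticFunction in
lemma EP.zeta1_lower : ∃ c : ℝ, 0 < c ∧ ∀ t : ℝ, c ≤ ‖riemannZeta₁ (2 + t * I)‖ := by
  set K : ℝ := ∑' n : ℕ, ‖LSeries.term (fun n => ((moebius n : ℤ) : ℂ)) 2 n‖ with hK
  have hK0 : 0 ≤ K := tsum_nonneg fun _ => norm_nonneg _
  refine ⟨(K + 1)⁻¹, by positivity, fun t => ?_⟩
  set s : ℂ := 2 + t * I with hs
  have hre : s.re = 2 := by simp [hs]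
  have h1 : 1 < s.re := by rw [hre]; norm_num
  have hne : s ≠ 1 := by intro h; rw [h] at h1; simp at h1
  have hmul := LSeries_one_mul_Lseries_moebius h1
  rw [LSeries_one_eq_riemannZeta h1] at hmul
  have hb : ‖LSeries (fun n => ((moebius n : ℤ) : ℂ)) s‖ ≤ K := by
    have hterm : ∀ n, ‖LSeries.term (fun n => ((moebius n : ℤ) : ℂ)) s n‖ =
        ‖LSeries.term (fun n => ((moebius n : ℤ) : ℂ)) 2 n‖ := by
      intro n
      rw [LSeries.norm_term_eq, LSeries.norm_term_eq, hre]; simp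
    have hsum : Summable fun n => ‖LSeries.term (fun n => ((moebius n : ℤ) : ℂ)) s n‖ :=
      (LSeriesSummable_moebius_iff.2 h1).norm
    refine (norm_tsum_le_tsum_norm hsum).trans (le_of_eq ?_)
    exact tsum_congr hterm
  have hz : 1 ≤ ‖riemannZeta s‖ * K := by
    have : (1:ℝ) = ‖riemannZeta s‖ * ‖LSeries (fun n => ((moebius n : ℤ) : ℂ)) s‖ := by
      rw [← norm_mul, hmul, norm_one]
    rw [this]; gcongr
  have hz1 : riemannZeta₁ s = (s - 1) * riemannZeta s := by
    rw [riemannZeta_eq_inv_sub_mul hne]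
    field_simp [sub_ne_zero.2 hne]
  have hs1 : 1 ≤ ‖s - 1‖ := by
    have := Complex.abs_re_le_norm (s - 1)
    simp only [sub_re, hre, one_re] at this
    norm_num at this; exact this
  rw [hz1, norm_mul, inv_le_iff_one_le_mul₀ (by positivity)]
  have : 0 ≤ ‖riemannZeta s‖ := norm_nonneg _
  have h4 : ‖riemannZeta s‖ ≤ ‖s - 1‖ * ‖riemannZeta s‖ := le_mul_of_one_le_left this hs1
  nlinarith

open Complex Metric Set in
/-- Borel–Carathéodory for the logarithmic derivative. -/
lemma EP.logDeriv_bound {g : ℂ → ℂ} {c : ℂ} {R r K : ℝ} (hr : 0 < r) (hrR : r < R) (hK : 1 < K)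
    (hg : DifferentiableOn ℂ g (ball c R)) (h0 : ∀ z ∈ ball c R, g z ≠ 0)
    (hb : ∀ z ∈ ball c R, ‖g z‖ ≤ K * ‖g c‖) {z : ℂ} (hz : ‖z - c‖ ≤ r) :
    ‖deriv g z / g z‖ ≤ (8 * R / (R - r) ^ 2) * Real.log K := by
  have hR : 0 < R := hr.trans hrR
  have hcR : c ∈ ball c R := mem_ball_self hR
  have hgd : DifferentiableOn ℂ (fun z => deriv g z / g z) (ball c R) :=
    (hg.deriv isOpen_ball).div hg h0
  obtain ⟨F, hFc, hF⟩ := (hgd.isExactOn_ball).with_val_at c 0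
  have hFd : DifferentiableOn ℂ F (ball c R) := fun z hz => (hF z hz).differentiableAt.differentiableWithinAt
  -- `g = g c * exp F`
  have hexp : ∀ z ∈ ball c R, g z = g c * exp (F z) := by
    have hder : ∀ z ∈ ball c R, HasDerivAt (fun z => g z * exp (-F z)) 0 z := by
      intro z hz
      have h1 : HasDerivAt g (deriv g z) z :=
        (hg.differentiableAt (isOpen_ball.mem_nhds hz)).hasDerivAt
      have h2 := h1.mul ((hF z hz).neg.cexp)
      convert! h2 using 1
      field_simp [h0 z hz]
      ring
    intro z hz
    have := (convex_ball c R).is_const_of_fderivWithin_eq_zero (𝕜 := ℂ) (f := fun z => g z * exp (-F z))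
      (fun z hz => (hder z hz).differentiableAt.differentiableWithinAt)
      (fun z hz => by
        rw [fderivWithin_of_isOpen isOpen_ball hz]
        have := (hder z hz).hasFDerivAt.fderiv
        rw [this]; ext; simp) hz hcR
    simp only [hFc, neg_zero, exp_zero, mul_one] at this
    rw [← this, mul_assoc, ← exp_add]; simp
  have hgc : 0 < ‖g c‖ := norm_pos_iff.2 (h0 c hcR)
  have hre : ∀ z ∈ ball c R, (F z).re ≤ Real.log K := by
    intro z hz
    have h1 := hb z hz
    rw [hexp z hz, norm_mul, mul_comm, norm_exp] at h1
    have := le_of_mul_le_mul_right h1 hgc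
    exact (Real.le_log_iff_exp_le (by linarith)).2 this
  have hlogK : 0 < Real.log K := Real.log_pos hK
  set ρ := (R - r) / 2 with hρ
  have hρ0 : 0 < ρ := by rw [hρ]; linarith
  -- bound F on closedBall c (r+ρ)
  have hFb : ∀ w, ‖w - c‖ ≤ r + ρ → ‖F w‖ ≤ 2 * Real.log K * R / ρ := by
    intro w hw
    have hmaps : MapsTo (fun u => F (u + c)) (ball 0 R) {z | z.re ≤ Real.log K} := by
      intro u hu
      exact hre _ (by simpa [dist_eq_norm] using hu)
    have hd : DifferentiableOn ℂ (fun u => F (u + c)) (ball 0 R) := by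
      refine hFd.comp (by fun_prop) ?_
      intro u hu
      simpa [dist_eq_norm] using hu
    have hwR : ‖w - c‖ < R := by linarith
    have := borelCaratheodory_zero hlogK hd hmaps hR (z := w - c) (by simpa using hwR) (by simpa using hFc)
    simp only [sub_add_cancel] at this
    refine this.trans ?_
    have : ρ ≤ R - ‖w - c‖ := by linarith
    gcongr
  have hzb : z ∈ ball c R := by rw [mem_ball, dist_eq_norm]; linarith
  have hder : deriv F z = deriv g z / g z := (hF z hzb).deriv
  rw [← hder]
  have hsub : closedBall z ρ ⊆ ball c R := by
    intro w hw
    rw [mem_closedBall, dist_eq_norm] at hw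
    rw [mem_ball, dist_eq_norm]
    calc ‖w - c‖ ≤ ‖w - z‖ + ‖z - c‖ := norm_sub_le_norm_sub_add_norm_sub _ _ _
      _ < R := by linarith
  have := norm_deriv_le_of_forall_mem_sphere_norm_le (f := F) (c := z) (R := ρ)
    (C := 2 * Real.log K * R / ρ) hρ0
    (by
      apply DifferentiableOn.diffContOnCl
      rw [closure_ball z hρ0.ne']
      exact hFd.mono hsub)
    (by
      intro w hw
      apply hFb
      rw [mem_sphere, dist_eq_norm] at hw
      calc ‖w - c‖ ≤ ‖w - z‖ + ‖z - c‖ := norm_sub_le_norm_sub_add_norm_sub _ _ _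
        _ ≤ _ := by linarith)
  refine this.trans (le_of_eq ?_)
  rw [hρ]
  have : R - r ≠ 0 := by linarith
  field_simp
  ring

lemma EP.zeta1_ne_zero (RH : RiemannHypothesis) {s : ℂ} (hs : 1 / 2 < s.re) :
    riemannZeta₁ s ≠ 0 := by
  by_cases h1 : s = 1
  · simp [h1]
  intro h
  have hz : riemannZeta s = 0 := by rw [riemannZeta_eq_inv_sub_mul h1, h, mul_zero]
  have := RH s hz ?_ h1
  · linarith
  · rintro ⟨n, rfl⟩
    simp at hs
    have : (0:ℝ) ≤ n := Nat.cast_nonneg n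
    norm_num at hs
    linarith

open Complex Metric Set in
/-- Under RH the logarithmic derivative of `(s-1)ζ(s)` is `O(|t|^ε)` right of the critical line. -/
lemma EP.zeta1_logDeriv_bound (RH : RiemannHypothesis) {a : ℝ} (ha : 1 / 2 < a) {ε : ℝ} (hε : 0 < ε) :
    ∃ C : ℝ, 0 ≤ C ∧ ∀ s : ℂ, a ≤ s.re → s.re ≤ 2 →
      ‖deriv riemannZeta₁ s / riemannZeta₁ s‖ ≤ C * (|s.im| + 5) ^ ε := by
  obtain ⟨c, hc, hlow⟩ := EP.zeta1_lower
  rcases lt_or_ge 2 a with h2 | h2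
  · exact ⟨0, le_rfl, fun s h h' => by linarith⟩
  set r : ℝ := max (2 - a) 1 with hr
  have hr0 : 0 < r := lt_max_of_lt_right one_pos
  have hr1 : r < 3 / 2 := max_lt (by linarith) (by norm_num)
  set A : ℝ := (8 * (3 / 2) / (3 / 2 - r) ^ 2) with hA
  have hA0 : 0 ≤ A := by positivity
  set B : ℝ := |Real.log (3 / c)| with hB
  refine ⟨A * (B + 2 / ε), by positivity, fun s hs hs2 => ?_⟩
  set t := s.im with ht
  set w : ℂ := 2 + t * I with hw
  set X : ℝ := |t| + 5 with hX
  have hX5 : 5 ≤ X := by simp [hX]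
  have hball : ∀ z ∈ ball w (3 / 2), 1 / 2 < z.re ∧ ‖z‖ ≤ |t| + 4 := by
    intro z hz
    rw [mem_ball, dist_eq_norm] at hz
    constructor
    · have := (abs_re_le_norm (z - w)).trans_lt hz
      simp [hw] at this
      have := (abs_lt.1 this).1
      linarith
    · have h1 : ‖w‖ ≤ 2 + |t| := by
        refine (norm_add_le _ _).trans ?_
        simp
      have : ‖z‖ ≤ ‖z - w‖ + ‖w‖ := by simpa using norm_add_le (z - w) w
      linarith
  have hgw := hlow t
  rw [← hw] at hgw
  set K : ℝ := max (3 / c * X ^ 2) 2 with hK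
  have hKb : ∀ z ∈ ball w (3 / 2), ‖riemannZeta₁ z‖ ≤ K * ‖riemannZeta₁ w‖ := by
    intro z hz
    obtain ⟨h1, h2⟩ := hball z hz
    calc ‖riemannZeta₁ z‖ ≤ 3 * (1 + ‖z‖) ^ 2 := EP.zeta1_growth h1.le
      _ ≤ 3 * X ^ 2 := by
        have : 1 + ‖z‖ ≤ X := by linarith
        gcongr
      _ = (3 / c * X ^ 2) * c := by field_simp
      _ ≤ K * ‖riemannZeta₁ w‖ := by
        apply mul_le_mul (le_max_left _ _) hgw hc.le
        exact le_trans (by norm_num) (le_max_right _ _)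
  have hsw : ‖s - w‖ ≤ r := by
    have : s - w = ((s.re - 2 : ℝ) : ℂ) := by
      apply Complex.ext <;> simp [hw, ht]
    rw [this, Complex.norm_real, Real.norm_eq_abs, abs_of_nonpos (by linarith)]
    exact le_trans (by linarith) (le_max_left _ _)
  have key := EP.logDeriv_bound hr0 hr1 (lt_of_lt_of_le one_lt_two (le_max_right _ _))
    differentiable_riemannZeta₁.differentiableOn
    (fun z hz => EP.zeta1_ne_zero RH (hball z hz).1) hKb hsw
  refine key.trans ?_
  rw [mul_assoc]
  apply mul_le_mul_of_nonneg_left _ hA0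
  have hlogX : Real.log X ≤ X ^ ε / ε := Real.log_le_rpow_div (by linarith) hε
  have hXε : 1 ≤ X ^ ε := Real.one_le_rpow (by linarith) hε.le
  have hlX0 : 0 ≤ Real.log X := Real.log_nonneg (by linarith)
  have hlogK : Real.log K ≤ B + 2 * Real.log X := by
    rcases max_cases (3 / c * X ^ 2) 2 with ⟨h, _⟩ | ⟨h, _⟩
    · rw [hK, h, Real.log_mul (by positivity) (by positivity), Real.log_pow]
      have := le_abs_self (Real.log (3 / c))
      push_cast; linarith
    · rw [hK, h]
      have : Real.log 2 ≤ Real.log X := Real.log_le_log (by norm_num) (by linarith)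
      have : 0 ≤ B := abs_nonneg _
      linarith
  have hB0 : 0 ≤ B := abs_nonneg _
  calc Real.log K ≤ B * 1 + 2 * Real.log X := by linarith
    _ ≤ B * X ^ ε + 2 * (X ^ ε / ε) := by gcongr
    _ = _ := by ring

open Complex MeasureTheory Set in
lemma EP.norm_line_ge {a σ : ℝ} (ha : 1 ≤ a + σ) (y : ℝ) : Real.sqrt (1 + y ^ 2) ≤ ‖(σ + y * I + a : ℂ)‖ := by
  rw [Real.sqrt_le_left (norm_nonneg _), Complex.sq_norm, Complex.normSq_apply]
  simp
  nlinarith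

open Complex MeasureTheory Set in
lemma EP.norm_line_inv_le {a b σ : ℝ} (ha : 1 ≤ a + σ) (hb : 1 ≤ b + σ) (y : ℝ) :
    ‖1 / ((σ + y * I + a : ℂ) * (σ + y * I + b))‖ ≤ (1 + y ^ 2)⁻¹ := by
  have h1 := EP.norm_line_ge ha y
  have h2 := EP.norm_line_ge hb y
  have h0 : 0 < Real.sqrt (1 + y ^ 2) := Real.sqrt_pos.2 (by positivity)
  rw [norm_div, norm_one, norm_mul, one_div]
  apply inv_anti₀ (by positivity)
  calc 1 + y ^ 2 = Real.sqrt (1 + y ^ 2) * Real.sqrt (1 + y ^ 2) := (Real.mul_self_sqrt (by positivity)).symm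
    _ ≤ _ := by gcongr

open Complex MeasureTheory Set in
lemma EP.line_ne_zero {a σ : ℝ} (ha : 1 ≤ a + σ) (y : ℝ) : (σ + y * I + a : ℂ) ≠ 0 := by
  intro h
  have := congrArg Complex.re h
  simp at this
  linarith

open Complex MeasureTheory Set in
lemma EP.line_integrable {a b σ : ℝ} (ha : 1 ≤ a + σ) (hb : 1 ≤ b + σ) :
    Integrable (fun y : ℝ => 1 / ((σ + y * I + a : ℂ) * (σ + y * I + b))) := by
  refine integrable_inv_one_add_sq.mono' ?_ (Eventually.of_forall fun y => EP.norm_line_inv_le ha hb y)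
  apply Continuous.aestronglyMeasurable
  refine Continuous.div (by fun_prop) (by fun_prop) fun y => ?_
  exact mul_ne_zero (EP.line_ne_zero ha y) (EP.line_ne_zero hb y)

open Complex MeasureTheory Set in
lemma EP.kernel {a b : ℝ} (ha : -1 ≤ a) (hb : -1 ≤ b) {u : ℝ} (hu : 0 < u) :
    ∫ y : ℝ, (u : ℂ) ^ (-((2 : ℝ) + y * I : ℂ)) * ((b - a) / (((2 : ℝ) + y * I + a : ℂ) * ((2 : ℝ) + y * I + b))) =
      2 * Real.pi * (if u ≤ 1 then ((u ^ a - u ^ b : ℝ) : ℂ) else 0) := by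
  set f : ℝ → ℂ := fun t => indicator (Ioc 0 1) (fun t => (t : ℂ) ^ (a : ℂ) : ℝ → ℂ) t -
    indicator (Ioc 0 1) (fun t => (t : ℂ) ^ (b : ℂ) : ℝ → ℂ) t with hf
  have hA : ∀ y : ℝ, HasMellin (indicator (Ioc 0 1) (fun t => (t : ℂ) ^ (a : ℂ) : ℝ → ℂ)) ((2 : ℝ) + y * I) (1 / ((2 : ℝ) + y * I + a)) :=
    fun y => hasMellin_cpow_Ioc _ (by simp; linarith)
  have hB : ∀ y : ℝ, HasMellin (indicator (Ioc 0 1) (fun t => (t : ℂ) ^ (b : ℂ) : ℝ → ℂ)) ((2 : ℝ) + y * I) (1 / ((2 : ℝ) + y * I + b)) :=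
    fun y => hasMellin_cpow_Ioc _ (by simp; linarith)
  have hm : ∀ y : ℝ, HasMellin f ((2 : ℝ) + y * I) ((b - a) / (((2 : ℝ) + y * I + a : ℂ) * ((2 : ℝ) + y * I + b))) := by
    intro y
    have := hasMellin_sub (hA y).1 (hB y).1
    rw [(hA y).2, (hB y).2] at this
    convert! this using 1
    have h1 := EP.line_ne_zero (a := a) (σ := 2) (by linarith) y
    have h2 := EP.line_ne_zero (a := b) (σ := 2) (by linarith) y
    field_simp
    ring
  have hfu : ∀ t : ℝ, 0 < t → f t = (if t ≤ 1 then ((t ^ a - t ^ b : ℝ) : ℂ) else 0) := by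
    intro t ht
    simp only [hf, indicator, mem_Ioc, ht, true_and]
    split_ifs
    · rw [← ofReal_cpow ht.le, ← ofReal_cpow ht.le]; push_cast; rfl
    · simp
  have hcont : ContinuousAt f u := by
    have h1 : ContinuousAt (fun t : ℝ => ((min t 1 : ℝ) ^ a - (min t 1 : ℝ) ^ b : ℝ)) u := by
      have h0 : min u 1 ≠ 0 := by positivity
      have hmin : ContinuousAt (fun t : ℝ => min t 1) u := by fun_prop
      exact (hmin.rpow_const (Or.inl h0)).sub (hmin.rpow_const (Or.inl h0))
    refine (continuous_ofReal.continuousAt.comp h1).congr ?_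
    filter_upwards [lt_mem_nhds hu] with t ht
    rw [hfu t ht]
    simp only [Function.comp]
    split_ifs with h
    · rw [min_eq_left h]
    · rw [min_eq_right (not_le.1 h).le]; simp
  have hconv : MellinConvergent f ((2:ℝ):ℂ) := by simpa using (hm 0).1
  have hvert : VerticalIntegrable (mellin f) 2 := by
    rw [VerticalIntegrable]
    have := (EP.line_integrable (a := a) (b := b) (σ := 2) (by linarith) (by linarith)).const_mul ((b:ℂ) - a)
    refine this.congr (Eventually.of_forall fun y => ?_)
    simp only
    rw [(hm y).2]; ring
  have := mellinInv_mellin_eq 2 f hu hconv hvert hcont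
  rw [← hfu u hu, ← this, mellinInv]
  simp_rw [fun y : ℝ => (hm y).2]
  simp only [smul_eq_mul, real_smul]
  have hpi : (Real.pi : ℂ) ≠ 0 := by exact_mod_cast Real.pi_ne_zero
  have h1 : (2 * (Real.pi : ℂ)) * ((1 / (2 * Real.pi) : ℝ) : ℂ) = 1 := by
    push_cast
    field_simp
  rw [← mul_assoc, h1, one_mul]

/-- Minus the logarithmic derivative of zeta, minus its polar part, continued. -/
noncomputable def EP.Z (s : ℂ) : ℂ := -(deriv riemannZeta₁ s / riemannZeta₁ s) - 1

open Complex ArithmeticFunction in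
lemma EP.Z_eq {s : ℂ} (hs : 1 < s.re) :
    EP.Z s = LSeries (fun n => ((vonMangoldt n : ℝ) : ℂ)) s - s / (s - 1) := by
  have h1 : s ≠ 1 := by rintro rfl; simp at hs
  have h2 : s - 1 ≠ 0 := sub_ne_zero.2 h1
  have hz := riemannZeta_ne_zero_of_one_lt_re hs
  have h3 : riemannZeta₁ s ≠ 0 := by
    intro h; apply hz; rw [riemannZeta_eq_inv_sub_mul h1, h, mul_zero]
  rw [LSeries_vonMangoldt_eq_deriv_riemannZeta_div hs,
    deriv_riemannZeta_eq_neg_inv_sub_sq_mul_add h1, riemannZeta_eq_inv_sub_mul h1, EP.Z]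
  field_simp
  ring

open Complex MeasureTheory Set ArithmeticFunction in
lemma EP.perron_vonMangoldt {x : ℝ} (hx : 0 < x) :
    Integrable (fun y : ℝ => LSeries (fun n => ((vonMangoldt n : ℝ) : ℂ)) ((2:ℝ) + y * I) *
      ((x : ℂ) ^ ((2:ℝ) + y * I + 1) * (1 / (((2:ℝ) + y * I) * ((2:ℝ) + y * I + 1))))) ∧
    ∫ y : ℝ, LSeries (fun n => ((vonMangoldt n : ℝ) : ℂ)) ((2:ℝ) + y * I) *
      ((x : ℂ) ^ ((2:ℝ) + y * I + 1) * (1 / (((2:ℝ) + y * I) * ((2:ℝ) + y * I + 1)))) =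
      2 * Real.pi * ((∑' n : ℕ, vonMangoldt n * max (x - n) 0 : ℝ) : ℂ) := by
  set G : ℝ → ℂ := fun y => ((x : ℂ) ^ ((2:ℝ) + y * I + 1) * (1 / (((2:ℝ) + y * I) * ((2:ℝ) + y * I + 1)))) with hG
  set c : ℕ → ℂ := (fun n => ((vonMangoldt n : ℝ) : ℂ)) with hc
  set F : ℕ → ℝ → ℂ := fun n y => LSeries.term c ((2:ℝ) + y * I) n * G y with hF
  have hx0 : (x : ℂ) ≠ 0 := by exact_mod_cast hx.ne'
  have hGc : Continuous G := by
    refine Continuous.mul ?_ ?_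
    · exact Continuous.const_cpow (by fun_prop) (Or.inl hx0)
    · refine Continuous.div (by fun_prop) (by fun_prop) fun y => ?_
      have h1 := EP.line_ne_zero (a := 0) (σ := 2) (by norm_num) y
      have h2 := EP.line_ne_zero (a := 1) (σ := 2) (by norm_num) y
      simp only [ofReal_zero, add_zero, ofReal_one] at h1 h2
      exact mul_ne_zero h1 h2
  have hGb : ∀ y, ‖G y‖ ≤ x ^ (3:ℝ) * (1 + y ^ 2)⁻¹ := by
    intro y
    rw [hG, norm_mul, norm_cpow_eq_rpow_re_of_pos hx]
    have h1 := EP.norm_line_inv_le (a := 0) (b := 1) (σ := 2) (by norm_num) (by norm_num) y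
    simp only [ofReal_zero, add_zero, ofReal_one] at h1
    have h2 : ((2:ℝ) + y * I + 1 : ℂ).re = 3 := by simp; norm_num
    rw [h2]
    gcongr
  have hGi : Integrable G := (integrable_inv_one_add_sq.const_mul _).mono' hGc.aestronglyMeasurable
    (Eventually.of_forall hGb)
  have hterm : ∀ (n : ℕ) (y : ℝ), ‖LSeries.term c ((2:ℝ) + y * I) n‖ = ‖LSeries.term c 2 n‖ := by
    intro n y
    rw [LSeries.norm_term_eq, LSeries.norm_term_eq]; simp
  have htc : ∀ n, Continuous fun y : ℝ => LSeries.term c ((2:ℝ) + y * I) n := by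
    intro n
    rcases eq_or_ne n 0 with rfl | hn
    · simp [continuous_const]
    · simp_rw [LSeries.term_of_ne_zero hn]
      have : (n : ℂ) ≠ 0 := by exact_mod_cast hn
      refine Continuous.div (by fun_prop) (Continuous.const_cpow (by fun_prop) (Or.inl this)) fun y => ?_
      simp [cpow_eq_zero_iff, this]
  have hsumm : Summable fun n => ‖LSeries.term c 2 n‖ :=
    (LSeriesSummable_vonMangoldt (s := 2) (by simp)).norm
  have hFi : ∀ n, Integrable (F n) := by
    intro n
    refine hGi.bdd_mul (c := ‖LSeries.term c 2 n‖) (htc n).aestronglyMeasurable ?_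
    exact Eventually.of_forall fun y => (hterm n y).le
  have hFn : ∀ n, ∫ y, ‖F n y‖ = ‖LSeries.term c 2 n‖ * ∫ y, ‖G y‖ := by
    intro n
    rw [← integral_const_mul]
    congr 1; ext y
    rw [hF, norm_mul, hterm]
  have hS : Summable fun n => ∫ y, ‖F n y‖ := by
    simp_rw [hFn]; exact hsumm.mul_right _
  have hIntg : ∀ n, ∫ y, F n y = 2 * Real.pi * ((vonMangoldt n * max (x - n) 0 : ℝ) : ℂ) := by
    intro n
    rcases eq_or_ne n 0 with rfl | hn
    · simp [hF]
    have hn0 : (0:ℝ) < n := by exact_mod_cast Nat.pos_of_ne_zero hn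
    have hu : 0 < (n : ℝ) / x := by positivity
    have hk := EP.kernel (a := 0) (b := 1) (by norm_num) (by norm_num) hu
    have e : ∀ y : ℝ, F n y = (c n * x) * ((((n : ℝ) / x : ℝ) : ℂ) ^ (-((2 : ℝ) + y * I : ℂ)) *
        ((((1:ℝ):ℂ) - ((0:ℝ):ℂ)) / (((2 : ℝ) + y * I + ((0:ℝ):ℂ) : ℂ) * ((2 : ℝ) + y * I + ((1:ℝ) : ℂ))))) := by
      intro y
      simp only [hF, hG]
      rw [LSeries.term_of_ne_zero hn, ofReal_div, div_cpow_ofReal_nonneg hn0.le hx.le, cpow_add _ _ hx0,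
        cpow_one, cpow_neg, cpow_neg]
      have h1 : (x : ℂ) ^ (((2:ℝ) : ℂ) + y * I) ≠ 0 := by simp [cpow_eq_zero_iff, hx0]
      simp only [ofReal_natCast, ofReal_zero, add_zero, ofReal_one, sub_zero]
      field_simp
    simp_rw [e]
    rw [integral_const_mul, hk]
    split_ifs with h
    · rw [div_le_one hx] at h
      rw [max_eq_left (by linarith)]
      simp only [hc, Real.rpow_zero, Real.rpow_one]
      push_cast
      field_simp
    · rw [div_le_one hx] at h
      rw [max_eq_right (by linarith)]
      simp
  have hmain := hasSum_integral_of_summable_integral_norm hFi hS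
  have hfun : ∀ y : ℝ, ∑' n, F n y = LSeries c ((2:ℝ) + y * I) * G y := by
    intro y
    simp only [hF]
    rw [tsum_mul_right, LSeries]
  simp_rw [hfun, hIntg] at hmain
  constructor
  · have hLm : Measurable fun y : ℝ => LSeries c ((2:ℝ) + y * I) := by
      apply Measurable.tsum
      exact fun n => (htc n).measurable
    refine hGi.bdd_mul (c := ∑' n, ‖LSeries.term c 2 n‖) ?_ (Eventually.of_forall fun y => ?_)
    · exact hLm.aestronglyMeasurable
    · have hs : Summable fun n => ‖LSeries.term c ((2:ℝ) + y * I) n‖ := by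
        simp_rw [hterm]; exact hsumm
      refine (norm_tsum_le_tsum_norm hs).trans (le_of_eq (tsum_congr fun n => hterm n y))
  · rw [← hmain.tsum_eq, tsum_mul_left, Complex.ofReal_tsum]

open Complex MeasureTheory Set ArithmeticFunction in
lemma EP.perron_Z {x : ℝ} (hx : 1 ≤ x) :
    ∫ y : ℝ, EP.Z ((2:ℝ) + y * I) *
      ((x : ℂ) ^ ((2:ℝ) + y * I + 1) * (1 / (((2:ℝ) + y * I) * ((2:ℝ) + y * I + 1)))) =
      2 * Real.pi * (((∑' n : ℕ, vonMangoldt n * max (x - n) 0) - (x ^ 2 - 1) / 2 : ℝ) : ℂ) := by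
  have hx1 : 0 < x := by linarith
  have hx0 : (x : ℂ) ≠ 0 := by exact_mod_cast hx1.ne'
  obtain ⟨hi, he⟩ := EP.perron_vonMangoldt hx1
  have hk := EP.kernel (a := -1) (b := 1) (by norm_num) (by norm_num) (inv_pos.2 hx1)
  have hki : Integrable (fun y : ℝ => (x / 2 : ℂ) * (((x⁻¹ : ℝ) : ℂ) ^ (-((2 : ℝ) + y * I : ℂ)) *
      ((((1:ℝ):ℂ) - ((-1:ℝ):ℂ)) / (((2 : ℝ) + y * I + ((-1:ℝ):ℂ) : ℂ) * ((2 : ℝ) + y * I + ((1:ℝ) : ℂ)))))) := by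
    refine Integrable.const_mul ?_ _
    have := (EP.line_integrable (a := -1) (b := 1) (σ := 2) (by norm_num) (by norm_num)).const_mul (((1:ℝ):ℂ) - ((-1:ℝ):ℂ))
    refine Integrable.bdd_mul (c := x ^ (2:ℝ)) (this.congr (Eventually.of_forall fun y => by simp only; ring)) ?_ ?_
    · apply Continuous.aestronglyMeasurable
      refine Continuous.const_cpow (by fun_prop) (Or.inl ?_)
      simpa using hx0
    · refine Eventually.of_forall fun y => ?_
      rw [norm_cpow_eq_rpow_re_of_pos (inv_pos.2 hx1)]
      have : (-((2 : ℝ) + y * I : ℂ)).re = -2 := by simp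
      rw [this, Real.inv_rpow hx1.le, Real.rpow_neg hx1.le, inv_inv]
  have e : ∀ y : ℝ, EP.Z ((2:ℝ) + y * I) *
      ((x : ℂ) ^ ((2:ℝ) + y * I + 1) * (1 / (((2:ℝ) + y * I) * ((2:ℝ) + y * I + 1)))) =
      LSeries (fun n => ((vonMangoldt n : ℝ) : ℂ)) ((2:ℝ) + y * I) *
      ((x : ℂ) ^ ((2:ℝ) + y * I + 1) * (1 / (((2:ℝ) + y * I) * ((2:ℝ) + y * I + 1)))) -
      (x / 2 : ℂ) * (((x⁻¹ : ℝ) : ℂ) ^ (-((2 : ℝ) + y * I : ℂ)) *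
      ((((1:ℝ):ℂ) - ((-1:ℝ):ℂ)) / (((2 : ℝ) + y * I + ((-1:ℝ):ℂ) : ℂ) * ((2 : ℝ) + y * I + ((1:ℝ) : ℂ))))) := by
    intro y
    rw [EP.Z_eq (by simp)]
    have h1 := EP.line_ne_zero (a := -1) (σ := 2) (by norm_num) y
    have h2 := EP.line_ne_zero (a := 1) (σ := 2) (by norm_num) y
    have h3 := EP.line_ne_zero (a := 0) (σ := 2) (by norm_num) y
    have h4 : (((x⁻¹ : ℝ) : ℂ) ^ (-((2 : ℝ) + y * I : ℂ))) = (x:ℂ) ^ ((2 : ℝ) + y * I : ℂ) := by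
      rw [ofReal_inv, inv_cpow, cpow_neg, inv_inv]
      rw [arg_ofReal_of_nonneg hx1.le]; exact Real.pi_ne_zero.symm
    rw [h4, cpow_add _ _ hx0, cpow_one]
    simp only [ofReal_zero, add_zero, ofReal_one, ofReal_neg, ← sub_eq_add_neg, sub_neg_eq_add] at h1 h2 h3 ⊢
    generalize (((2:ℝ):ℂ) + y * I) = s at *
    field_simp
    ring
  simp_rw [e]
  rw [integral_sub hi hki, he, integral_const_mul, hk, if_pos (inv_le_one_of_one_le₀ hx)]
  rw [Real.rpow_neg_one, Real.rpow_one]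
  push_cast
  field_simp

open Complex MeasureTheory Set in
lemma EP.shift {f : ℂ → ℂ} {a b : ℝ} (hab : a ≤ b)
    (hd : ∀ s : ℂ, a ≤ s.re → s.re ≤ b → DifferentiableAt ℂ f s) {g : ℝ → ℝ} (hgi : Integrable g)
    (hg1 : Tendsto g atTop (nhds 0)) (hg2 : Tendsto g atBot (nhds 0))
    (hb : ∀ s : ℂ, a ≤ s.re → s.re ≤ b → ‖f s‖ ≤ g s.im) :
    ∫ y : ℝ, f (a + y * I) = ∫ y : ℝ, f (b + y * I) := by
  have hIntg : ∀ c, a ≤ c → c ≤ b → Integrable fun y : ℝ => f (c + y * I) := by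
    intro c h1 h2
    refine hgi.mono' ?_ (Eventually.of_forall fun y => ?_)
    · apply Continuous.aestronglyMeasurable
      rw [continuous_iff_continuousAt]
      intro y
      have := (hd (c + y * I) (by simpa) (by simpa)).continuousAt
      exact ContinuousAt.comp (f := fun y : ℝ => (c + y * I : ℂ)) this (by fun_prop)
    · simpa using hb (c + y * I) (by simpa) (by simpa)
  have hta := intervalIntegral_tendsto_integral (hIntg a le_rfl hab) tendsto_neg_atTop_atBot tendsto_id
  have htb := intervalIntegral_tendsto_integral (hIntg b hab le_rfl) tendsto_neg_atTop_atBot tendsto_id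
  have hhor : ∀ (T : ℝ → ℝ), Tendsto (fun t => g (T t)) atTop (nhds 0) →
      Tendsto (fun t => ∫ x in a..b, f (x + T t * I)) atTop (nhds 0) := by
    intro T hT
    rw [tendsto_zero_iff_norm_tendsto_zero]
    refine squeeze_zero (fun _ => norm_nonneg _) (g := fun t => g (T t) * |b - a|) (fun t => ?_) (by simpa using hT.mul_const |b - a|)
    apply intervalIntegral.norm_integral_le_of_norm_le_const
    intro x hx
    rw [uIoc_of_le hab] at hx
    simpa using hb (x + T t * I) (by simpa using hx.1.le) (by simpa using hx.2)
  have h1 := hhor (fun t => t) hg1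
  have h2 := hhor (fun t => -t) (hg2.comp tendsto_neg_atTop_atBot)
  have key : ∀ t : ℝ, (∫ x in a..b, f (x + (-t : ℝ) * I)) - (∫ x in a..b, f (x + t * I)) +
      I * (∫ y in (-t)..t, f (b + y * I)) - I * (∫ y in (-t)..t, f (a + y * I)) = 0 := by
    intro t
    have := Complex.integral_boundary_rect_eq_zero_of_differentiableOn f (a + (-t : ℝ) * I) (b + t * I) ?_
    · simpa [smul_eq_mul] using this
    · intro s hs
      rw [mem_reProdIm] at hs
      simp only [add_re, ofReal_re, mul_re, I_re, mul_zero, ofReal_im, I_im, mul_one, sub_self, add_zero, uIcc_of_le hab] at hs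
      exact (hd s hs.1.1 hs.1.2).differentiableWithinAt
  have hlim := ((h2.sub h1).add (htb.const_mul I)).sub (hta.const_mul I)
  simp only [id, key, sub_zero, zero_add] at hlim
  have := tendsto_nhds_unique hlim tendsto_const_nhds
  have h3 : I * ((∫ y : ℝ, f (b + y * I)) - ∫ y : ℝ, f (a + y * I)) = 0 := by rw [mul_sub]; exact this
  rw [mul_eq_zero, or_iff_right I_ne_zero, sub_eq_zero] at h3
  exact h3.symm

lemma EP.Z_bound (RH : RiemannHypothesis) {a : ℝ} (ha : 1/2 < a) {ε : ℝ} (hε : 0 < ε) :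
    ∃ C, 0 ≤ C ∧ ∀ s : ℂ, a ≤ s.re → s.re ≤ 2 → ‖EP.Z s‖ ≤ C * (1 + s.im ^ 2) ^ ε := by
  obtain ⟨C, hC, h⟩ := EP.zeta1_logDeriv_bound RH ha (ε := 2 * ε) (by linarith)
  refine ⟨C * 50 ^ ε + 1, by positivity, fun s h1 h2 => ?_⟩
  have h3 := h s h1 h2
  have h4 : (|s.im| + 5) ^ (2 * ε) ≤ 50 ^ ε * (1 + s.im ^ 2) ^ ε := by
    rw [Real.rpow_mul (by positivity), ← Real.mul_rpow (by norm_num) (by positivity)]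
    gcongr
    rw [Real.rpow_two]
    nlinarith [sq_abs s.im, sq_nonneg (|s.im| - 5), abs_nonneg s.im]
  have h5 : (1:ℝ) ≤ (1 + s.im ^ 2) ^ ε := Real.one_le_rpow (by nlinarith [sq_nonneg s.im]) hε.le
  calc ‖EP.Z s‖ ≤ ‖deriv riemannZeta₁ s / riemannZeta₁ s‖ + 1 := by
        rw [EP.Z]; refine (norm_sub_le _ _).trans ?_; simp
    _ ≤ C * (50 ^ ε * (1 + s.im ^ 2) ^ ε) + (1 + s.im ^ 2) ^ ε := by
        gcongr; exact h3.trans (by gcongr)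
    _ = _ := by ring

lemma EP.Z_diff (RH : RiemannHypothesis) {s : ℂ} (hs : 1/2 < s.re) : DifferentiableAt ℂ EP.Z s := by
  have h := EP.zeta1_ne_zero RH hs
  have h1 : DifferentiableAt ℂ (deriv riemannZeta₁) s :=
    (differentiable_riemannZeta₁.analyticAt s).deriv.differentiableAt
  unfold EP.Z
  exact ((h1.div (differentiable_riemannZeta₁ s) h).neg).sub_const 1

lemma EP.norm_ge1 {s : ℂ} (hs : 1/2 < s.re) : (1 + s.im ^ 2) ^ (1/2:ℝ) / 2 ≤ ‖s‖ := by
  rw [← Real.sqrt_eq_rpow, div_le_iff₀ (by norm_num), Real.sqrt_le_left (by positivity), mul_pow, Complex.sq_norm, Complex.normSq_apply]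
  nlinarith

lemma EP.norm_ge2 {s : ℂ} (hs : 1/2 < s.re) : (1 + s.im ^ 2) ^ (1/2:ℝ) ≤ ‖s + 1‖ := by
  rw [← Real.sqrt_eq_rpow, Real.sqrt_le_left (by positivity), Complex.sq_norm, Complex.normSq_apply]
  simp
  nlinarith

open Complex MeasureTheory Set ArithmeticFunction in
lemma EP.perron_shift (RH : RiemannHypothesis) {a : ℝ} (ha : 1/2 < a) (ha2 : a ≤ 2) {x : ℝ} (hx : 1 ≤ x) :
    Integrable (fun y : ℝ => EP.Z (a + y * I) *
      ((x : ℂ) ^ (a + y * I + 1) * (1 / ((a + y * I) * (a + y * I + 1))))) ∧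
    ∫ y : ℝ, EP.Z (a + y * I) *
      ((x : ℂ) ^ (a + y * I + 1) * (1 / ((a + y * I) * (a + y * I + 1)))) =
      2 * Real.pi * (((∑' n : ℕ, vonMangoldt n * max (x - n) 0) - (x ^ 2 - 1) / 2 : ℝ) : ℂ) := by
  have hx1 : 0 < x := by linarith
  have hx0 : (x : ℂ) ≠ 0 := by exact_mod_cast hx1.ne'
  obtain ⟨C, hC, hZ⟩ := EP.Z_bound RH ha (ε := 1/4) (by norm_num)
  set f : ℂ → ℂ := fun s => EP.Z s * ((x : ℂ) ^ (s + 1) * (1 / (s * (s + 1)))) with hf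
  have hd : ∀ s : ℂ, a ≤ s.re → s.re ≤ 2 → DifferentiableAt ℂ f s := by
    intro s h1 h2
    have h3 : s ≠ 0 := by rintro rfl; simp at h1; linarith
    have h4 : s + 1 ≠ 0 := by
      intro h; have := congrArg Complex.re h; simp at this; linarith
    refine (EP.Z_diff RH (by linarith)).mul (DifferentiableAt.mul ?_ ?_)
    · exact DifferentiableAt.const_cpow (by fun_prop) (Or.inl hx0)
    · exact DifferentiableAt.div (by fun_prop) (by fun_prop) (mul_ne_zero h3 h4)
  set g : ℝ → ℝ := fun y => (C * x ^ (3:ℝ) * 2) * (1 + ‖y‖ ^ 2) ^ (-(3/2:ℝ)/2) with hg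
  have hgi : Integrable g := by
    refine Integrable.const_mul ?_ _
    apply integrable_rpow_neg_one_add_norm_sq
    simp; norm_num
  have hb : ∀ s : ℂ, a ≤ s.re → s.re ≤ 2 → ‖f s‖ ≤ g s.im := by
    intro s h1 h2
    have h3 := EP.norm_ge1 (s := s) (by linarith)
    have h4 := EP.norm_ge2 (s := s) (by linarith)
    have hp : 0 < 1 + s.im ^ 2 := by positivity
    rw [hf, norm_mul, norm_mul, norm_cpow_eq_rpow_re_of_pos hx1, norm_div, norm_one, norm_mul]
    have h5 : x ^ (s + 1).re ≤ x ^ (3:ℝ) := Real.rpow_le_rpow_of_exponent_le hx (by simp; linarith)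
    have h6 : 1 / (‖s‖ * ‖s + 1‖) ≤ 2 * (1 + s.im ^ 2) ^ (-1:ℝ) := by
      calc 1 / (‖s‖ * ‖s + 1‖) ≤ 1 / (((1 + s.im ^ 2) ^ (1/2:ℝ) / 2) * (1 + s.im ^ 2) ^ (1/2:ℝ)) := by
            gcongr
        _ = 2 * (1 + s.im ^ 2) ^ (-1:ℝ) := by
            rw [← Real.sqrt_eq_rpow, Real.rpow_neg_one]
            rw [div_mul_eq_mul_div, Real.mul_self_sqrt hp.le]
            field_simp
    calc _ ≤ (C * (1 + s.im ^ 2) ^ (1/4:ℝ)) * (x ^ (3:ℝ) * (2 * (1 + s.im ^ 2) ^ (-1:ℝ))) := by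
          have := hZ s h1 h2
          gcongr
      _ = g s.im := by
          simp only [hg, Real.norm_eq_abs, sq_abs]
          rw [show (-(3/2:ℝ)/2) = 1/4 + (-1) by norm_num, Real.rpow_add hp]
          ring
  have hlim : ∀ l : Filter ℝ, Tendsto (fun y : ℝ => ‖y‖) l atTop → Tendsto g l (nhds 0) := by
    intro l hl
    have : Tendsto (fun y : ℝ => (1 + ‖y‖ ^ 2) ^ (-(3/4:ℝ))) l (nhds 0) := by
      refine (tendsto_rpow_neg_atTop (by norm_num)).comp ?_
      exact tendsto_atTop_add_const_left _ _ ((tendsto_pow_atTop two_ne_zero).comp hl)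
    have := this.const_mul (C * x ^ (3:ℝ) * 2)
    rw [mul_zero] at this
    simp only [hg]
    convert this using 4
    norm_num
  have hs := EP.shift ha2 hd hgi (hlim _ (by simpa using tendsto_abs_atTop_atTop)) (hlim _ (by simpa using tendsto_abs_atBot_atTop)) hb
  constructor
  · refine hgi.mono' ?_ (Eventually.of_forall fun y => ?_)
    · apply Continuous.aestronglyMeasurable
      rw [continuous_iff_continuousAt]
      intro y
      have := (hd (a + y * I) (by simp) (by simpa)).continuousAt
      exact ContinuousAt.comp (f := fun y : ℝ => (a + y * I : ℂ)) this (by fun_prop)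
    · have h1 := hb (a + y * I) (by simp) (by simpa)
      have h2 : (a + y * I : ℂ).im = y := by simp
      rw [h2] at h1
      exact h1
  · refine Eq.trans hs ?_
    exact EP.perron_Z hx

lemma EP.rpow_interp {X A B ε : ℝ} (hX : 0 ≤ X) (hA : X ≤ A) (hB : X ≤ B) (h0 : 0 ≤ ε) (h1 : ε ≤ 1) :
    X ≤ A ^ (1 - ε) * B ^ ε := by
  calc X = X ^ (1 - ε) * X ^ ε := by
        rw [← Real.rpow_add' hX (by simp)]; simp
    _ ≤ _ := by
        have : 0 ≤ A := hX.trans hA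
        gcongr

open Complex Set in
lemma EP.cpow_diff_le {n : ℝ} (hn : 1 ≤ n) {s : ℂ} (hs : 0 ≤ s.re) :
    ‖((n + 1 : ℝ) : ℂ) ^ (s + 1) - (n : ℂ) ^ (s + 1)‖ ≤ ‖s + 1‖ * (n + 1) ^ s.re := by
  have hs1 : s + 1 ≠ 0 := by
    intro h; have := congrArg Complex.re h; simp at this; linarith
  have := Convex.norm_image_sub_le_of_norm_hasDerivWithin_le (f := fun u : ℝ => (u : ℂ) ^ (s + 1))
    (f' := fun u : ℝ => (s + 1) * (u : ℂ) ^ s) (s := Icc n (n + 1)) (x := n) (y := n + 1)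
    (C := ‖s + 1‖ * (n + 1) ^ s.re) ?_ ?_ (convex_Icc _ _) (by simp) (by simp)
  · simpa using this
  · intro u hu
    have hu0 : u ≠ 0 := by have := hu.1; intro h; linarith
    have := hasDerivAt_ofReal_cpow_const hu0 hs1
    rw [add_sub_cancel_right] at this
    exact this.hasDerivWithinAt
  · intro u hu
    have hu0 : 0 < u := by have := hu.1; linarith
    rw [norm_mul, norm_cpow_eq_rpow_re_of_pos hu0]
    gcongr
    exact hu.2

open Complex MeasureTheory Set ArithmeticFunction in
lemma EP.sum_diff (n : ℕ) :
    (∑' m : ℕ, vonMangoldt m * max (((n + 1 : ℕ) : ℝ) - m) 0) - (∑' m : ℕ, vonMangoldt m * max ((n : ℝ) - m) 0) =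
      Chebyshev.psi n := by
  rw [tsum_eq_sum (s := Finset.range (n + 1)), tsum_eq_sum (s := Finset.range (n + 1)), ← Finset.sum_sub_distrib,
    Chebyshev.psi_eq_sum_Icc, Nat.floor_natCast, ← Nat.range_succ_eq_Icc_zero]
  · refine Finset.sum_congr rfl fun m hm => ?_
    have : (m : ℝ) ≤ n := by exact_mod_cast Nat.lt_succ_iff.1 (Finset.mem_range.1 hm)
    rw [max_eq_left (by push_cast; linarith), max_eq_left (by linarith)]
    push_cast; ring
  · intro m hm
    have : (n + 1 : ℝ) ≤ m := by exact_mod_cast not_lt.1 (fun h => hm (Finset.mem_range.2 h))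
    rw [max_eq_right (by linarith), mul_zero]
  · intro m hm
    have : (n + 1 : ℝ) ≤ m := by exact_mod_cast not_lt.1 (fun h => hm (Finset.mem_range.2 h))
    rw [max_eq_right (by push_cast; linarith), mul_zero]

open Complex MeasureTheory Set ArithmeticFunction in
lemma EP.psi_nat_bound (RH : RiemannHypothesis) {a ε : ℝ} (ha : 1/2 < a) (ha2 : a ≤ 2) (hε : 0 < ε) (hε1 : ε ≤ 1) :
    ∃ C, ∀ n : ℕ, 1 ≤ n → |Chebyshev.psi n - n - 1/2| ≤ C * (n + 1 : ℝ) ^ (a + ε) := by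
  obtain ⟨C, hC, hZ⟩ := EP.Z_bound RH ha (ε := ε / 4) (by positivity)
  set g : ℝ → ℝ := fun y => (1 + ‖y‖ ^ 2) ^ (-(1 + ε / 2)/2) with hg
  have hgi : Integrable g := by
    apply integrable_rpow_neg_one_add_norm_sq
    simp; linarith
  refine ⟨(C * 2 * 2) * (∫ y, g y), fun n hn => ?_⟩
  have hn1 : (1:ℝ) ≤ n := by exact_mod_cast hn
  obtain ⟨i1, e1⟩ := EP.perron_shift RH ha ha2 hn1
  obtain ⟨i2, e2⟩ := EP.perron_shift RH ha ha2 (x := ((n + 1 : ℕ) : ℝ)) (by push_cast; linarith)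
  have e3 : (2 * Real.pi : ℂ) * ((Chebyshev.psi n - n - 1/2 : ℝ) : ℂ) =
      ∫ y : ℝ, EP.Z (a + y * I) * (((((n + 1 : ℕ) : ℝ) : ℂ) ^ (a + y * I + 1) - (((n : ℝ) : ℂ)) ^ (a + y * I + 1)) * (1 / ((a + y * I) * (a + y * I + 1)))) := by
    simp_rw [sub_mul, mul_sub]
    rw [integral_sub i2 i1, e1, e2, ← EP.sum_diff]
    push_cast
    ring
  have hb : ∀ y : ℝ, ‖EP.Z (a + y * I) * (((((n + 1 : ℕ) : ℝ) : ℂ) ^ (a + y * I + 1) - (((n : ℝ) : ℂ)) ^ (a + y * I + 1)) * (1 / ((a + y * I) * (a + y * I + 1))))‖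
      ≤ (C * 2 * 2 * (n + 1 : ℝ) ^ (a + ε)) * g y := by
    intro y
    have hre : (a + y * I : ℂ).re = a := by simp
    have him : (a + y * I : ℂ).im = y := by simp
    generalize (a + y * I : ℂ) = s at *
    subst hre him
    have h3 := EP.norm_ge1 (s := s) (by linarith)
    have h4 := EP.norm_ge2 (s := s) (by linarith)
    have hp : 0 < 1 + s.im ^ 2 := by positivity
    have hZs := hZ s le_rfl ha2
    have hn0 : (0:ℝ) < n + 1 := by positivity
    have d1 : ‖((((n + 1 : ℕ) : ℝ) : ℂ) ^ (s + 1) - (((n : ℝ) : ℂ)) ^ (s + 1))‖ ≤ ‖s + 1‖ * (n + 1) ^ s.re := by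
      have := EP.cpow_diff_le hn1 (s := s) (by linarith)
      push_cast at this ⊢
      exact this
    have d2 : ‖((((n + 1 : ℕ) : ℝ) : ℂ) ^ (s + 1) - (((n : ℝ) : ℂ)) ^ (s + 1))‖ ≤ 2 * (n + 1 : ℝ) ^ (s.re + 1) := by
      refine (norm_sub_le _ _).trans ?_
      rw [norm_cpow_eq_rpow_re_of_pos (by positivity), norm_cpow_eq_rpow_re_of_pos (by positivity), two_mul]
      simp only [add_re, one_re]
      have : (n : ℝ) ^ (s.re + 1) ≤ (n + 1 : ℝ) ^ (s.re + 1) := by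
        gcongr; linarith
      push_cast
      linarith
    have d3 := EP.rpow_interp (norm_nonneg _) d1 d2 hε.le hε1
    have hs1 : 0 < ‖s + 1‖ := lt_of_lt_of_le (by positivity) h4
    have hs0 : 0 < ‖s‖ := lt_of_lt_of_le (by positivity) h3
    have d4 : (‖s + 1‖ * (n + 1) ^ s.re) ^ (1 - ε) * (2 * (n + 1 : ℝ) ^ (s.re + 1)) ^ ε ≤
        2 * (n + 1 : ℝ) ^ (s.re + ε) * ‖s + 1‖ ^ (1 - ε) := by
      rw [Real.mul_rpow (by positivity) (by positivity), Real.mul_rpow (by positivity) (by positivity),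
        ← Real.rpow_mul hn0.le, ← Real.rpow_mul hn0.le]
      have : (n + 1 : ℝ) ^ (s.re + ε) = (n + 1 : ℝ) ^ (s.re * (1 - ε)) * (n + 1 : ℝ) ^ ((s.re + 1) * ε) := by
        rw [← Real.rpow_add hn0]; congr 1; ring
      rw [this]
      have h2 : (2:ℝ) ^ ε ≤ 2 := by
        calc (2:ℝ) ^ ε ≤ 2 ^ (1:ℝ) := Real.rpow_le_rpow_of_exponent_le (by norm_num) hε1
          _ = 2 := by simp
      calc _ = (2:ℝ) ^ ε * ((n + 1 : ℝ) ^ (s.re * (1 - ε)) * (n + 1 : ℝ) ^ ((s.re + 1) * ε) * ‖s + 1‖ ^ (1 - ε)) := by ring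
        _ ≤ 2 * ((n + 1 : ℝ) ^ (s.re * (1 - ε)) * (n + 1 : ℝ) ^ ((s.re + 1) * ε) * ‖s + 1‖ ^ (1 - ε)) := by gcongr
        _ = _ := by ring
    have d5 : ‖s + 1‖ ^ (1 - ε) * (1 / (‖s‖ * ‖s + 1‖)) ≤ 2 * (1 + s.im ^ 2) ^ (-(1/2) - ε / 2) := by
      calc ‖s + 1‖ ^ (1 - ε) * (1 / (‖s‖ * ‖s + 1‖)) = 1 / (‖s‖ * ‖s + 1‖ ^ ε) := by
            rw [Real.rpow_sub hs1, Real.rpow_one]; field_simp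
        _ ≤ 1 / (((1 + s.im ^ 2) ^ (1/2:ℝ) / 2) * ((1 + s.im ^ 2) ^ (1/2:ℝ)) ^ ε) := by
            gcongr
        _ = _ := by
            rw [← Real.rpow_mul hp.le, Real.rpow_sub hp, Real.rpow_neg hp.le, show 1 / 2 * ε = ε / 2 by ring]
            field_simp
    rw [norm_mul, norm_mul, norm_div, norm_one, norm_mul]
    calc _ ≤ (C * (1 + s.im ^ 2) ^ (ε / 4)) * ((2 * (n + 1 : ℝ) ^ (s.re + ε) * ‖s + 1‖ ^ (1 - ε)) * (1 / (‖s‖ * ‖s + 1‖))) := by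
          gcongr
          exact d3.trans d4
      _ = (C * (1 + s.im ^ 2) ^ (ε / 4)) * (2 * (n + 1 : ℝ) ^ (s.re + ε)) * (‖s + 1‖ ^ (1 - ε) * (1 / (‖s‖ * ‖s + 1‖))) := by ring
      _ ≤ (C * (1 + s.im ^ 2) ^ (ε / 4)) * (2 * (n + 1 : ℝ) ^ (s.re + ε)) * (2 * (1 + s.im ^ 2) ^ (-(1/2) - ε / 2)) := by gcongr
      _ = _ := by
          simp only [hg, Real.norm_eq_abs, sq_abs]
          rw [show (-(1 + ε / 2)/2) = ε / 4 + (-(1/2) - ε / 2) by ring, Real.rpow_add hp]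
          ring
  have hfin := norm_integral_le_of_norm_le (hgi.const_mul (C * 2 * 2 * (n + 1 : ℝ) ^ (a + ε))) (Eventually.of_forall hb)
  rw [← e3, integral_const_mul, norm_mul] at hfin
  have hpi : (1:ℝ) ≤ ‖(2 * Real.pi : ℂ)‖ := by
    rw [norm_mul, Complex.norm_real, Real.norm_eq_abs, abs_of_pos Real.pi_pos]
    have := Real.pi_gt_three
    simp; linarith
  rw [Complex.norm_real, Real.norm_eq_abs] at hfin
  calc |Chebyshev.psi n - n - 1/2| ≤ ‖(2 * Real.pi : ℂ)‖ * |Chebyshev.psi n - n - 1/2| := le_mul_of_one_le_left (abs_nonneg _) hpi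
    _ ≤ _ := hfin
    _ = _ := by ring

/-- RH implies `θ(x) = x + O(x^a)` for every `a > 1/2`. -/
lemma EP.theta_bound (RH : RiemannHypothesis) {a : ℝ} (ha : 1/2 < a) :
    ∃ C, 0 ≤ C ∧ ∀ x : ℝ, 1 ≤ x → |Chebyshev.theta x - x| ≤ C * x ^ a := by
  wlog ha1 : a ≤ 1 generalizing a
  · obtain ⟨C, hC, h⟩ := this (a := 1) (by norm_num) le_rfl
    refine ⟨C, hC, fun x hx => (h x hx).trans ?_⟩
    have := Real.rpow_le_rpow_of_exponent_le hx (not_le.1 ha1).le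
    gcongr
  obtain ⟨C, h⟩ := EP.psi_nat_bound RH (a := (a + 1/2) / 2) (ε := (a - 1/2) / 2) (by linarith) (by linarith) (by linarith) (by linarith)
  obtain ⟨D, hD⟩ := Chebyshev.psi_sub_theta_le_mul_sqrt
  rw [show (a + 1/2) / 2 + (a - 1/2) / 2 = a by ring] at h
  refine ⟨|C| * 2 ^ a + |D| + 2, by positivity, fun x hx => ?_⟩
  have hx0 : 0 < x := by linarith
  have hf : 1 ≤ ⌊x⌋₊ := Nat.le_floor (by simpa)
  have h1 := h _ hf
  rw [← Chebyshev.psi_eq_psi_coe_floor] at h1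
  have h2 := Nat.floor_le hx0.le
  have h3 := Nat.lt_floor_add_one x
  have h4 := hD x
  have h5 := Chebyshev.theta_le_psi x
  have h6 : Real.sqrt x ≤ x ^ a := by
    rw [Real.sqrt_eq_rpow]; exact Real.rpow_le_rpow_of_exponent_le hx ha.le
  have h7 : (1:ℝ) ≤ x ^ a := Real.one_le_rpow hx (by linarith)
  have h8 : (⌊x⌋₊ + 1 : ℝ) ^ a ≤ 2 ^ a * x ^ a := by
    rw [← Real.mul_rpow (by norm_num) hx0.le]
    gcongr
    linarith
  have h9 : C * (⌊x⌋₊ + 1 : ℝ) ^ a ≤ |C| * 2 ^ a * x ^ a := by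
    rw [mul_assoc]
    exact (mul_le_mul_of_nonneg_right (le_abs_self C) (by positivity)).trans (by gcongr)
  have h10 : D * Real.sqrt x ≤ |D| * x ^ a :=
    (mul_le_mul_of_nonneg_right (le_abs_self D) (by positivity)).trans (by gcongr)
  rw [abs_le] at h1 ⊢
  have : (|C| * 2 ^ a + |D| + 2) * x ^ a = |C| * 2 ^ a * x ^ a + |D| * x ^ a + 2 * x ^ a := by ring
  have p1 : 0 ≤ |C| * 2 ^ a * x ^ a := by positivity
  have p2 : 0 ≤ |D| * x ^ a := by positivity
  rw [this]
  constructor <;> linarith [h1.1, h1.2]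

noncomputable def EP.S (z : ℂ) : ℂ := ∑' k : ℕ, (-z) ^ (k + 1) / (((k + 1) * Nat.factorial (k + 1) : ℕ) : ℂ)

lemma EP.S_hasDerivAt' (z : ℂ) :
    HasDerivAt EP.S (∑' k : ℕ, -((-z) ^ k / ((Nat.factorial (k + 1) : ℕ) : ℂ))) z := by
  refine hasDerivAt_tsum_of_isPreconnected (u := fun k => (‖z‖ + 1) ^ k / (Nat.factorial k : ℝ))
    (t := Metric.ball 0 (‖z‖ + 1)) (y₀ := 0)
    (g' := fun (k : ℕ) (z : ℂ) => -((-z) ^ k / ((Nat.factorial (k + 1) : ℕ) : ℂ)))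
    (Real.summable_pow_div_factorial _) Metric.isOpen_ball (convex_ball _ _).isPreconnected ?_ ?_ ?_ ?_ ?_
  · intro k y _
    have h1 := ((hasDerivAt_neg y).pow (k + 1)).div_const (((k + 1) * Nat.factorial (k + 1) : ℕ) : ℂ)
    convert! h1 using 1
    have : ((k : ℂ) + 1) ≠ 0 := by exact_mod_cast Nat.succ_ne_zero k
    have h2 : (((k + 1).factorial : ℕ) : ℂ) ≠ 0 := by exact_mod_cast Nat.factorial_ne_zero _
    push_cast
    field_simp
  · intro k y hy
    have hy' : ‖y‖ ≤ ‖z‖ + 1 := by simpa using (Metric.mem_ball.1 hy).le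
    rw [norm_neg, norm_div, norm_pow, norm_neg, Complex.norm_natCast]
    gcongr
    omega
  · simp; positivity
  · simp
  · simp

lemma EP.S_hasDerivAt {z : ℂ} (hz : z ≠ 0) : HasDerivAt EP.S ((Complex.exp (-z) - 1) / z) z := by
  convert EP.S_hasDerivAt' z using 1
  have h := (NormedSpace.expSeries_div_hasSum_exp (-z : ℂ))
  rw [← Complex.exp_eq_exp_ℂ, ← hasSum_nat_add_iff' 1] at h
  simp only [Finset.range_one, Finset.sum_singleton, pow_zero, Nat.factorial_zero, Nat.cast_one, div_one] at h
  have h2 := h.div_const z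
  rw [← h2.tsum_eq]
  refine tsum_congr fun k => ?_
  rw [pow_succ]; field_simp

lemma EP.E1_eq (z : ℂ) : expIntegralE1 z = -(Real.eulerMascheroniConstant : ℂ) - Complex.log z - EP.S z := rfl

lemma EP.E1_hasDerivAt {z : ℂ} (hz : z ∈ Complex.slitPlane) :
    HasDerivAt expIntegralE1 (-(Complex.exp (-z) / z)) z := by
  have h0 : z ≠ 0 := Complex.slitPlane_ne_zero hz
  have h := ((Complex.hasDerivAt_log hz).const_sub (-(Real.eulerMascheroniConstant : ℂ))).sub (EP.S_hasDerivAt h0)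
  convert! h using 1
  field_simp
  ring

open Complex MeasureTheory Set in
lemma EP.integral_log_exp :
    IntegrableOn (fun t : ℝ => (Real.log t : ℂ) * Complex.exp (-t)) (Ioi 0) ∧
    ∫ t in Ioi (0:ℝ), (Real.log t : ℂ) * Complex.exp (-t) = -(Real.eulerMascheroniConstant : ℂ) := by
  have h1 := Complex.hasDerivAt_GammaIntegral (s := 1) (by simp)
  have h2 : Complex.GammaIntegral =ᶠ[nhds 1] Complex.Gamma := by
    filter_upwards [(isOpen_lt continuous_const Complex.continuous_re).mem_nhds (show (0:ℝ) < (1:ℂ).re by simp)] with a ha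
    exact (Complex.Gamma_eq_integral ha).symm
  have h3 := (Complex.hasDerivAt_Gamma_one.congr_of_eventuallyEq h2).unique h1
  simp only [sub_self, cpow_zero, one_mul] at h3
  have h4 : ∫ t in Ioi (0:ℝ), (Real.log t : ℂ) * Complex.exp (-t) = -(Real.eulerMascheroniConstant : ℂ) := by
    rw [h3]; push_cast; rfl
  refine ⟨?_, h4⟩
  by_contra hn
  have := integral_undef hn
  rw [this] at h4
  have h5 := Real.one_half_lt_eulerMascheroniConstant
  have h6 : Real.eulerMascheroniConstant = 0 := by
    have : (Real.eulerMascheroniConstant : ℂ) = 0 := by linear_combination h4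
    exact_mod_cast this
  linarith

open Complex MeasureTheory Set in
lemma EP.E1_real_tendsto : Tendsto (fun y : ℝ => expIntegralE1 (y : ℂ)) atTop (nhds 0) := by
  obtain ⟨hi, he⟩ := EP.integral_log_exp
  set Φ : ℝ → ℂ := fun t => -((Real.log t : ℂ) * Complex.exp (-t)) - expIntegralE1 t with hΦ
  have hder : ∀ t : ℝ, 0 < t → HasDerivAt Φ ((Real.log t : ℂ) * Complex.exp (-t)) t := by
    intro t ht
    have ht' : (t:ℂ) ≠ 0 := by exact_mod_cast ht.ne'
    have a1 : HasDerivAt (fun t : ℝ => (Real.log t : ℂ)) ((t⁻¹ : ℝ) : ℂ) t := (Real.hasDerivAt_log ht.ne').ofReal_comp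
    have a2 : HasDerivAt (fun t : ℝ => Complex.exp (-t)) (-Complex.exp (-t)) t := by
      have := (hasDerivAt_neg (t:ℂ)).cexp.comp_ofReal
      simpa using this
    have a3 : HasDerivAt (fun t : ℝ => expIntegralE1 t) (-(Complex.exp (-t) / t)) t :=
      (EP.E1_hasDerivAt (z := t) (by simp [ht])).comp_ofReal
    convert! ((a1.mul a2).neg).sub a3 using 1
    push_cast
    field_simp
    ring
  have h0 : Tendsto Φ (nhdsWithin 0 (Ioi 0)) (nhds (Real.eulerMascheroniConstant : ℂ)) := by
    have hS : Tendsto (fun t : ℝ => EP.S t) (nhdsWithin 0 (Ioi 0)) (nhds 0) := by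
      have c : ContinuousAt (fun t : ℝ => EP.S t) 0 :=
        ContinuousAt.comp (f := fun t : ℝ => (t:ℂ)) (EP.S_hasDerivAt' _).continuousAt (by fun_prop)
      have e : EP.S ((0:ℝ):ℂ) = 0 := by simp [EP.S]
      have := c.tendsto
      simp only [e] at this
      exact this.mono_left nhdsWithin_le_nhds
    have hL : Tendsto (fun t : ℝ => ((1 - Complex.exp (-t)) / t) * ((Real.log t * t : ℝ) : ℂ)) (nhdsWithin 0 (Ioi 0)) (nhds (1 * 0)) := by
      refine Tendsto.mul ?_ ?_
      · have a2 : HasDerivAt (fun t : ℝ => -Complex.exp (-t)) 1 0 := by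
          have := (hasDerivAt_neg ((0:ℝ):ℂ)).cexp.comp_ofReal.neg
          convert! this using 1; simp
        have := a2.tendsto_slope_zero_right
        refine this.congr fun t => ?_
        simp [div_eq_inv_mul]
        ring
      · have := tendsto_log_mul_rpow_nhdsGT_zero zero_lt_one
        simp only [Real.rpow_one] at this
        rw [← Complex.ofReal_zero]
        exact (Complex.continuous_ofReal.tendsto _).comp this
    have hsum := (hL.add hS).add_const (Real.eulerMascheroniConstant : ℂ)
    simp only [mul_zero, zero_add] at hsum
    refine hsum.congr' ?_
    filter_upwards [self_mem_nhdsWithin] with t ht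
    have ht0 : 0 < t := ht
    have ht' : (t:ℂ) ≠ 0 := by exact_mod_cast ht0.ne'
    simp only [hΦ, EP.E1_eq, ← Complex.ofReal_log ht0.le]
    push_cast
    field_simp
    ring
  have hlim := intervalIntegral_tendsto_integral_Ioi 0 hi tendsto_id
  rw [he] at hlim
  have hIntg : ∀ᶠ Y : ℝ in atTop, ∫ t in (0:ℝ)..Y, (Real.log t : ℂ) * Complex.exp (-t) = Φ Y - Real.eulerMascheroniConstant := by
    filter_upwards [eventually_gt_atTop 0] with Y hY
    apply intervalIntegral.integral_eq_sub_of_hasDerivAt_of_tendsto hY (fun x hx => hder x hx.1)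
    · rw [intervalIntegrable_iff_integrableOn_Ioc_of_le hY.le]
      exact hi.mono_set Ioc_subset_Ioi_self
    · exact h0
    · exact (hder Y hY).continuousAt.tendsto.mono_left nhdsWithin_le_nhds
  have hΦlim : Tendsto Φ atTop (nhds 0) := by
    have := (hlim.congr' hIntg).add_const (Real.eulerMascheroniConstant : ℂ)
    simpa using this
  have hle : Tendsto (fun t : ℝ => (Real.log t : ℂ) * Complex.exp (-t)) atTop (nhds 0) := by
    have h1 : Tendsto (fun t : ℝ => Real.log t * Real.exp (-t)) atTop (nhds 0) := by
      refine squeeze_zero' (g := fun t => t * Real.exp (-t)) ?_ ?_ ?_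
      · filter_upwards [eventually_ge_atTop 1] with t ht
        have := Real.log_nonneg ht
        positivity
      · filter_upwards [eventually_ge_atTop 1] with t ht
        have := Real.log_le_self (x := t) (by linarith)
        gcongr
      · simpa using Real.tendsto_pow_mul_exp_neg_atTop_nhds_zero 1
    have := (Complex.continuous_ofReal.tendsto _).comp h1
    simpa [Function.comp_def] using this
  have := (hΦlim.add hle).neg
  simp only [add_zero, neg_zero] at this
  refine this.congr fun t => ?_
  simp only [hΦ]; ring

open Complex Set in
lemma EP.E1_tendsto {w : ℂ} (hw : 0 < w.re) :
    Tendsto (fun v : ℝ => expIntegralE1 (w * v)) atTop (nhds 0) := by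
  have h1 : Tendsto (fun v : ℝ => expIntegralE1 ((w.re * v : ℝ) : ℂ)) atTop (nhds 0) :=
    EP.E1_real_tendsto.comp (tendsto_id.const_mul_atTop hw)
  have h2 : Tendsto (fun v : ℝ => expIntegralE1 (w * v) - expIntegralE1 ((w.re * v : ℝ) : ℂ)) atTop (nhds 0) := by
    rw [tendsto_zero_iff_norm_tendsto_zero]
    have hexp : Tendsto (fun v : ℝ => Real.exp (-(w.re * v)) * (|w.im| / w.re)) atTop (nhds 0) := by
      have := (Real.tendsto_exp_neg_atTop_nhds_zero.comp (tendsto_id.const_mul_atTop hw)).mul_const (|w.im| / w.re)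
      simpa [Function.comp_def] using this
    refine squeeze_zero' (Eventually.of_forall fun _ => norm_nonneg _) ?_ hexp
    filter_upwards [eventually_gt_atTop 0] with v hv
    have hp : 0 < w.re * v := by positivity
    have hconv : Convex ℝ {z : ℂ | w.re * v ≤ z.re} := convex_halfSpace_re_ge _
    have := Convex.norm_image_sub_le_of_norm_hasDerivWithin_le (f := expIntegralE1)
      (f' := fun z => -(Complex.exp (-z) / z)) (s := {z : ℂ | w.re * v ≤ z.re})
      (x := ((w.re * v : ℝ) : ℂ)) (y := w * v) (C := Real.exp (-(w.re * v)) / (w.re * v)) ?_ ?_ hconv (by simp) (by simp)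
    · refine this.trans (le_of_eq ?_)
      have e : w * v - ((w.re * v : ℝ) : ℂ) = ((w.im * v : ℝ) : ℂ) * I := by
        apply Complex.ext <;> simp
      rw [e, norm_mul, norm_I, Complex.norm_real, Real.norm_eq_abs, abs_mul, abs_of_pos hv]
      field_simp
    · intro z hz
      have hz' : 0 < z.re := lt_of_lt_of_le hp hz
      exact (EP.E1_hasDerivAt (Or.inl hz')).hasDerivWithinAt
    · intro z hz
      have hz1 : w.re * v ≤ z.re := hz
      rw [norm_neg, norm_div, Complex.norm_exp, neg_re]
      have h3 : w.re * v ≤ ‖z‖ := hz1.trans (re_le_norm z)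
      gcongr
  have := h2.add h1
  simpa using this

noncomputable def EP.R (t : ℝ) : ℝ := Chebyshev.theta t - t

lemma EP.R_meas : Measurable EP.R := Chebyshev.theta_mono.measurable.sub measurable_id

noncomputable def EP.M (k : ℕ) (s : ℂ) : ℂ :=
  ∫ t in Set.Ioi (2:ℝ), ((EP.R t / Real.log t ^ k : ℝ) : ℂ) * (t : ℂ) ^ (-(s + 1))

open MeasureTheory in
lemma EP.M_spec (RH : RiemannHypothesis) (k : ℕ) {s : ℂ} (hs : 1/2 < s.re) :
    IntegrableOn (fun t : ℝ => ((EP.R t / Real.log t ^ k : ℝ) : ℂ) * (t : ℂ) ^ (-(s + 1))) (Set.Ioi 2) ∧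
    DifferentiableAt ℂ (EP.M k) s := by
  obtain ⟨a, ha, ha'⟩ := exists_between hs
  obtain ⟨C, hC, h⟩ := EP.theta_bound RH ha
  refine EP.mellin_tail (f := fun t => ((EP.R t / Real.log t ^ k : ℝ) : ℂ)) (C := C / Real.log 2 ^ k) (a := a) ?_ (by norm_num) ?_ ha'
  · exact Complex.measurable_ofReal.comp (EP.R_meas.div (Real.measurable_log.pow_const k))
  · intro t ht
    have h2 : 0 < Real.log 2 := Real.log_pos (by norm_num)
    have h3 : Real.log 2 ≤ Real.log t := Real.log_le_log (by norm_num) ht.le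
    rw [Complex.norm_real, Real.norm_eq_abs, abs_div, abs_pow, abs_of_pos (h2.trans_le h3), div_mul_eq_mul_div]
    have := h t (by linarith)
    rw [EP.R]
    gcongr

noncomputable def EP.H (s : ℂ) : ℂ :=
  2 * ((2 : ℂ) ^ (-s) / Real.log 2) + expIntegralE1 ((s - 1) * (Real.log 2 : ℂ)) + (s * EP.M 1 s + EP.M 2 s)

lemma EP.slit_mul {z : ℂ} (hz : z ∈ Complex.slitPlane) {v : ℝ} (hv : 0 < v) : z * (v : ℂ) ∈ Complex.slitPlane := by
  rw [Complex.mem_slitPlane_iff] at *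
  rcases hz with h | h
  · left; simp; positivity
  · right; simp [h, hv.ne']

lemma EP.H_diff (RH : RiemannHypothesis) {s : ℂ} (hs : 1/2 < s.re) (hs1 : s - 1 ∈ Complex.slitPlane) :
    DifferentiableAt ℂ EP.H s := by
  have h2 : 0 < Real.log 2 := Real.log_pos (by norm_num)
  have hE : DifferentiableAt ℂ (fun s : ℂ => expIntegralE1 ((s - 1) * (Real.log 2 : ℂ))) s :=
    DifferentiableAt.comp (f := fun s : ℂ => (s - 1) * (Real.log 2 : ℂ)) s
      (EP.E1_hasDerivAt (EP.slit_mul hs1 h2)).differentiableAt (by fun_prop)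
  have hp : DifferentiableAt ℂ (fun s : ℂ => (2:ℂ) ^ (-s)) s :=
    DifferentiableAt.const_cpow (by fun_prop) (Or.inl two_ne_zero)
  have m1 := (EP.M_spec RH 1 hs).2
  have m2 := (EP.M_spec RH 2 hs).2
  unfold EP.H
  exact (((hp.div_const _).const_mul 2).add hE).add ((differentiableAt_id.mul m1).add m2)

noncomputable def EP.f (s : ℂ) (t : ℝ) : ℂ := (t : ℂ) ^ (-s) / (Real.log t : ℂ)
noncomputable def EP.D (s : ℂ) (t : ℝ) : ℂ := (t : ℂ) ^ (-(s + 1)) * (s / (Real.log t : ℂ) + 1 / (Real.log t : ℂ) ^ 2)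

lemma EP.f_hasDerivAt {s : ℂ} (hs : s ≠ 0) {t : ℝ} (ht : 1 < t) : HasDerivAt (EP.f s) (-EP.D s t) t := by
  have ht0 : 0 < t := by linarith
  have ht' : (t : ℂ) ≠ 0 := by exact_mod_cast ht0.ne'
  have hl : (Real.log t : ℂ) ≠ 0 := by exact_mod_cast (Real.log_pos ht).ne'
  have a1 := (hasDerivAt_ofReal_cpow_const ht0.ne' (neg_ne_zero.2 hs))
  have a2 : HasDerivAt (fun t : ℝ => (Real.log t : ℂ)) ((t⁻¹ : ℝ) : ℂ) t := (Real.hasDerivAt_log ht0.ne').ofReal_comp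
  convert! a1.div a2 hl using 1
  rw [EP.D, neg_add, ← sub_eq_add_neg, Complex.cpow_sub _ _ ht', Complex.cpow_one]
  push_cast
  field_simp
  ring

lemma EP.D_cont (s : ℂ) : ContinuousOn (EP.D s) (Set.Ioi 1) := by
  intro t ht
  have ht1 : 1 < t := ht
  have ht0 : 0 < t := by linarith
  have hl : (Real.log t : ℂ) ≠ 0 := by exact_mod_cast (Real.log_pos ht1).ne'
  have c1 : ContinuousAt (fun t : ℝ => (Real.log t : ℂ)) t :=
    Complex.continuous_ofReal.continuousAt.comp (Real.continuousAt_log ht0.ne')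
  have c2 : ContinuousAt (fun t : ℝ => (t : ℂ) ^ (-(s + 1))) t :=
    Complex.continuousAt_ofReal_cpow_const _ _ (Or.inr ht0.ne')
  apply ContinuousAt.continuousWithinAt
  unfold EP.D
  exact c2.mul ((continuousAt_const.div c1 hl).add (continuousAt_const.div (c1.pow 2) (pow_ne_zero 2 hl)))

open MeasureTheory in
lemma EP.abel {s : ℂ} (hs : s ≠ 0) (hs1 : s - 1 ∈ Complex.slitPlane)
    (hi : IntegrableOn (fun t : ℝ => EP.D s t * (EP.R t : ℂ)) (Set.Ioi 2)) {x : ℝ} (hx : 2 ≤ x) :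
    ∑ p ∈ Nat.primesBelow (⌊x⌋₊ + 1), (p : ℂ) ^ (-s) + expIntegralE1 ((s - 1) * (Real.log x : ℂ)) =
      EP.f s x * EP.R x + (2 * EP.f s 2 + expIntegralE1 ((s - 1) * (Real.log 2 : ℂ))) +
      ∫ t in (2:ℝ)..x, EP.D s t * (EP.R t : ℂ) := by
  have hsub : Set.Icc 2 x ⊆ Set.Ioi 1 := fun t ht => by have := ht.1; simp; linarith
  have hDi : IntegrableOn (EP.D s) (Set.Icc 2 x) := ((EP.D_cont s).mono hsub).integrableOn_Icc
  have hder : ∀ t, 1 < t → deriv (EP.f s) t = -EP.D s t := fun t ht => (EP.f_hasDerivAt hs ht).deriv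
  set c : ℕ → ℂ := fun k => if k.Prime then ((Real.log k : ℝ) : ℂ) else 0 with hc
  have hcs : ∀ t : ℝ, ∑ k ∈ Finset.Icc 0 ⌊t⌋₊, c k = (Chebyshev.theta t : ℂ) := by
    intro t
    rw [Chebyshev.theta_eq_sum_Icc, Finset.sum_filter]
    push_cast
    refine Finset.sum_congr rfl fun k _ => ?_
    simp only [hc]; split_ifs <;> simp
  have key := sum_mul_eq_sub_integral_mul₁ c (f := EP.f s) (by simp [hc]) (by simp [hc, Nat.not_prime_one]) x
    (fun t ht => (EP.f_hasDerivAt hs (hsub ht)).differentiableAt)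
    (hDi.neg.congr_fun (fun t ht => (hder t (hsub ht)).symm) measurableSet_Icc)
  simp_rw [hcs] at key
  have hL : ∑ k ∈ Finset.Icc 0 ⌊x⌋₊, EP.f s k * c k = ∑ p ∈ Nat.primesBelow (⌊x⌋₊ + 1), (p : ℂ) ^ (-s) := by
    rw [Nat.primesBelow, Finset.sum_filter, Nat.range_succ_eq_Icc_zero]
    refine Finset.sum_congr rfl fun k _ => ?_
    simp only [hc]
    split_ifs with hk
    · have : (Real.log k : ℂ) ≠ 0 := by
        exact_mod_cast (Real.log_pos (by exact_mod_cast hk.one_lt)).ne'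
      simp only [EP.f]
      rw [div_mul_cancel₀ _ this]
      simp
    · simp
  rw [hL] at key
  have hlog : ∀ t : ℝ, 1 < t → 0 < Real.log t := fun t ht => Real.log_pos ht
  set W : ℝ → ℂ := fun t => t * EP.f s t + expIntegralE1 ((s - 1) * (Real.log t : ℂ)) with hW
  have hWd : ∀ t ∈ Set.uIcc 2 x, HasDerivAt W (-(EP.D s t * t)) t := by
    intro t ht
    rw [Set.uIcc_of_le hx] at ht
    have ht1 : 1 < t := hsub ht
    have ht0 : 0 < t := by linarith
    have ht' : (t : ℂ) ≠ 0 := by exact_mod_cast ht0.ne'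
    have hl : (Real.log t : ℂ) ≠ 0 := by exact_mod_cast (Real.log_pos ht1).ne'
    have hs1' : s - 1 ≠ 0 := Complex.slitPlane_ne_zero hs1
    have a1 : HasDerivAt (fun t : ℝ => (t : ℂ)) 1 t := by simpa using (hasDerivAt_id t).ofReal_comp
    have a2 : HasDerivAt (fun t : ℝ => (s - 1) * (Real.log t : ℂ)) ((s - 1) * ((t⁻¹ : ℝ) : ℂ)) t :=
      ((Real.hasDerivAt_log ht0.ne').ofReal_comp).const_mul _
    have a3 := (EP.E1_hasDerivAt (EP.slit_mul hs1 (hlog t ht1))).comp t a2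
    have a4 := (a1.mul (EP.f_hasDerivAt hs ht1)).add a3
    convert! a4 using 1
    have e : Complex.exp (-((s - 1) * (Real.log t : ℂ))) = (t : ℂ) ^ (-s) * t := by
      rw [Complex.ofReal_log ht0.le, show -((s - 1) * Complex.log t) = Complex.log t * (-s + 1) by ring,
        ← Complex.cpow_def_of_ne_zero ht', Complex.cpow_add _ _ ht', Complex.cpow_one]
    rw [e, EP.f]
    push_cast
    field_simp
    ring
  have hDti : IntervalIntegrable (fun t => EP.D s t * t) volume 2 x := by
    apply ContinuousOn.intervalIntegrable
    rw [Set.uIcc_of_le hx]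
    exact ((EP.D_cont s).mono hsub).mul Complex.continuous_ofReal.continuousOn
  have hRi : IntervalIntegrable (fun t => EP.D s t * (EP.R t : ℂ)) volume 2 x := by
    rw [intervalIntegrable_iff_integrableOn_Ioc_of_le hx]
    exact hi.mono_set Set.Ioc_subset_Ioi_self
  have hFTC := intervalIntegral.integral_eq_sub_of_hasDerivAt hWd hDti.neg
  have hIntg : ∫ t in Set.Ioc 2 x, deriv (EP.f s) t * (Chebyshev.theta t : ℂ) =
      (W x - W 2) - ∫ t in (2:ℝ)..x, EP.D s t * (EP.R t : ℂ) := by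
    have hneg : IntervalIntegrable (fun t => -(EP.D s t * t)) volume 2 x := hDti.neg
    rw [← hFTC, ← intervalIntegral.integral_sub hneg hRi, intervalIntegral.integral_of_le hx]
    refine setIntegral_congr_fun measurableSet_Ioc fun t ht => ?_
    rw [hder t (by have := ht.1; linarith), EP.R]
    push_cast
    ring
  rw [key, hIntg]
  simp only [hW, EP.R]
  push_cast
  ring

open MeasureTheory in
lemma EP.H_lim (RH : RiemannHypothesis) {s : ℂ} (hs : 1/2 < s.re) (hs1 : s - 1 ∈ Complex.slitPlane) :
    Tendsto (fun x : ℝ => ∑ p ∈ Nat.primesBelow (⌊x⌋₊ + 1), (p : ℂ) ^ (-s) + expIntegralE1 ((s - 1) * (Real.log x : ℂ)))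
      atTop (nhds (EP.H s)) := by
  have h0 : s ≠ 0 := by rintro rfl; simp at hs; linarith
  have i1 := (EP.M_spec RH 1 hs).1
  have i2 := (EP.M_spec RH 2 hs).1
  have e : ∀ t : ℝ, EP.D s t * (EP.R t : ℂ) = s * (((EP.R t / Real.log t ^ 1 : ℝ) : ℂ) * (t : ℂ) ^ (-(s + 1))) +
      ((EP.R t / Real.log t ^ 2 : ℝ) : ℂ) * (t : ℂ) ^ (-(s + 1)) := by
    intro t
    rw [EP.D]; push_cast; ring
  have hi : IntegrableOn (fun t : ℝ => EP.D s t * (EP.R t : ℂ)) (Set.Ioi 2) := by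
    simp_rw [e]; exact (i1.const_mul s).add i2
  have hval : ∫ t in Set.Ioi (2:ℝ), EP.D s t * (EP.R t : ℂ) = s * EP.M 1 s + EP.M 2 s := by
    simp_rw [e]
    rw [integral_add (i1.const_mul s) i2, integral_const_mul, EP.M, EP.M]
  have hlim := intervalIntegral_tendsto_integral_Ioi 2 hi tendsto_id
  rw [hval] at hlim
  have hR : Tendsto (fun x => EP.f s x * EP.R x) atTop (nhds 0) := by
    obtain ⟨a, ha, ha'⟩ := exists_between hs
    obtain ⟨C, hC, h⟩ := EP.theta_bound RH ha
    rw [tendsto_zero_iff_norm_tendsto_zero]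
    have h1 : Tendsto (fun x : ℝ => C / Real.log 2 * x ^ (-(s.re - a))) atTop (nhds 0) := by
      simpa using (tendsto_rpow_neg_atTop (sub_pos.2 ha')).const_mul (C / Real.log 2)
    refine squeeze_zero' (Eventually.of_forall fun _ => norm_nonneg _) ?_ h1
    filter_upwards [eventually_ge_atTop 2] with x hx
    have hx0 : 0 < x := by linarith
    have h2 : 0 < Real.log 2 := Real.log_pos (by norm_num)
    have h3 : Real.log 2 ≤ Real.log x := Real.log_le_log (by norm_num) hx
    have h4 := h x (by linarith)
    rw [norm_mul, EP.f, norm_div, Complex.norm_cpow_eq_rpow_re_of_pos hx0, Complex.norm_real, Complex.norm_real,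
      Real.norm_eq_abs, Real.norm_eq_abs, abs_of_pos (h2.trans_le h3), EP.R, Complex.neg_re]
    calc x ^ (-s.re) / Real.log x * |Chebyshev.theta x - x| ≤ x ^ (-s.re) / Real.log 2 * (C * x ^ a) := by gcongr
      _ = C / Real.log 2 * x ^ (-(s.re - a)) := by
        rw [show -(s.re - a) = -s.re + a by ring, Real.rpow_add hx0]; ring
  have := (hR.add_const (2 * EP.f s 2 + expIntegralE1 ((s - 1) * (Real.log 2 : ℂ)))).add hlim
  have hH : 0 + (2 * EP.f s 2 + expIntegralE1 ((s - 1) * (Real.log 2 : ℂ))) + (s * EP.M 1 s + EP.M 2 s) = EP.H s := by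
    rw [EP.H, EP.f]; push_cast; ring
  rw [hH] at this
  refine this.congr' ?_
  filter_upwards [eventually_ge_atTop 2] with x hx
  rw [EP.abel h0 hs1 hi hx]
  rfl

noncomputable def EP.t (n : ℕ) (s : ℂ) : ℂ :=
  if n.Prime then Complex.log (1 - (n : ℂ) ^ (-s))⁻¹ - (n : ℂ) ^ (-s) else 0

lemma EP.prime_norm {p : ℕ} (hp : p.Prime) (s : ℂ) : ‖(p : ℂ) ^ (-s)‖ = (p : ℝ) ^ (-s.re) := by
  rw [Complex.norm_natCast_cpow_of_pos hp.pos, Complex.neg_re]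

lemma EP.prime_norm_le {p : ℕ} (hp : p.Prime) {s : ℂ} (hs : 1/2 < s.re) : ‖(p : ℂ) ^ (-s)‖ ≤ 3/4 := by
  rw [EP.prime_norm hp]
  have h2 : (2:ℝ) ≤ p := by exact_mod_cast hp.two_le
  calc (p : ℝ) ^ (-s.re) ≤ (p : ℝ) ^ (-(1/2) : ℝ) := Real.rpow_le_rpow_of_exponent_le (by linarith) (by linarith)
    _ ≤ (2 : ℝ) ^ (-(1/2) : ℝ) := Real.rpow_le_rpow_of_nonpos (by norm_num) h2 (by norm_num)
    _ ≤ 3/4 := by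
      rw [Real.rpow_neg (by norm_num), ← Real.sqrt_eq_rpow]
      rw [inv_le_comm₀ (by positivity) (by norm_num)]
      apply Real.le_sqrt_of_sq_le
      norm_num

lemma EP.t_bound {a : ℝ} (ha : 1/2 < a) (n : ℕ) {s : ℂ} (hs : a < s.re) : ‖EP.t n s‖ ≤ 2 * (n : ℝ) ^ (-(2 * a)) := by
  unfold EP.t
  split_ifs with hp
  · have h1 := EP.prime_norm_le hp (s := s) (by linarith)
    have h2 := Complex.norm_log_one_sub_inv_sub_self_le (z := (n : ℂ) ^ (-s)) (by linarith)
    have h3 : (1 - ‖(n : ℂ) ^ (-s)‖)⁻¹ ≤ 4 := by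
      rw [inv_le_comm₀ (by linarith) (by norm_num)]; linarith
    have hn : (1:ℝ) ≤ n := by exact_mod_cast hp.one_lt.le
    have h4 : ‖(n : ℂ) ^ (-s)‖ ^ 2 ≤ (n : ℝ) ^ (-(2 * a)) := by
      rw [EP.prime_norm hp, ← Real.rpow_natCast, ← Real.rpow_mul (by positivity)]
      apply Real.rpow_le_rpow_of_exponent_le hn
      push_cast; linarith
    have h5 : 0 ≤ (1 - ‖(n : ℂ) ^ (-s)‖)⁻¹ := inv_nonneg.2 (by linarith)
    calc _ ≤ ‖(n : ℂ) ^ (-s)‖ ^ 2 * (1 - ‖(n : ℂ) ^ (-s)‖)⁻¹ / 2 := h2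
      _ ≤ (n : ℝ) ^ (-(2 * a)) * 4 / 2 := by gcongr
      _ = _ := by ring
  · simp; positivity

lemma EP.t_diff (n : ℕ) {s : ℂ} (hs : 1/2 < s.re) : DifferentiableAt ℂ (EP.t n) s := by
  unfold EP.t
  split_ifs with hp
  · have h1 := EP.prime_norm_le hp hs
    have hn : (n : ℂ) ≠ 0 := by exact_mod_cast hp.ne_zero
    have hpow : DifferentiableAt ℂ (fun s : ℂ => (n:ℂ) ^ (-s)) s :=
      DifferentiableAt.const_cpow (by fun_prop) (Or.inl hn)
    have hre : 0 < (1 - (n : ℂ) ^ (-s)).re := by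
      have := Complex.re_le_norm ((n : ℂ) ^ (-s))
      simp only [Complex.sub_re, Complex.one_re]; linarith
    have hne : 1 - (n : ℂ) ^ (-s) ≠ 0 := by intro h; rw [h] at hre; simp at hre
    refine (DifferentiableAt.clog ((hpow.const_sub 1).inv hne) ?_).sub hpow
    left
    change 0 < ((1 - (n : ℂ) ^ (-s))⁻¹).re
    rw [Complex.inv_re]
    have := Complex.normSq_pos.2 hne
    positivity
  · exact differentiableAt_const _

noncomputable def EP.T (s : ℂ) : ℂ := ∑' n, EP.t n s

lemma EP.u_summable {a : ℝ} (ha : 1/2 < a) : Summable fun n : ℕ => 2 * (n : ℝ) ^ (-(2 * a)) :=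
  (Real.summable_nat_rpow.2 (by linarith)).mul_left 2

lemma EP.T_diff {s : ℂ} (hs : 1/2 < s.re) : DifferentiableAt ℂ EP.T s := by
  obtain ⟨a, ha, ha'⟩ := exists_between hs
  have hU : IsOpen {s : ℂ | a < s.re} := isOpen_lt continuous_const Complex.continuous_re
  refine (Complex.differentiableOn_tsum_of_summable_norm (EP.u_summable ha) (U := {s : ℂ | a < s.re}) ?_ hU ?_).differentiableAt
    (hU.mem_nhds ha')
  · intro n w hw
    have hw' : a < w.re := hw
    exact (EP.t_diff n (by linarith)).differentiableWithinAt
  · intro n w hw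
    exact EP.t_bound ha n hw

lemma EP.floor_tendsto : Tendsto (fun x : ℝ => ⌊x⌋₊ + 1) atTop atTop :=
  tendsto_atTop_mono (fun _ => Nat.le_succ _) tendsto_nat_floor_atTop

lemma EP.T_lim {s : ℂ} (hs : 1/2 < s.re) :
    Tendsto (fun x : ℝ => ∑ p ∈ Nat.primesBelow (⌊x⌋₊ + 1), EP.t p s) atTop (nhds (EP.T s)) := by
  obtain ⟨a, ha, ha'⟩ := exists_between hs
  have h := (Summable.of_norm_bounded (EP.u_summable ha) (fun n => EP.t_bound ha n ha')).hasSum.tendsto_sum_nat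
  refine (h.comp EP.floor_tendsto).congr fun x => ?_
  simp only [Function.comp]
  rw [Nat.primesBelow, Finset.sum_filter]
  refine Finset.sum_congr rfl fun k _ => ?_
  split_ifs with hk
  · rfl
  · simp [EP.t, hk]

lemma EP.main_lim (RH : RiemannHypothesis) {s : ℂ} (hs : 1/2 < s.re) (hs1 : s - 1 ∈ Complex.slitPlane) :
    Tendsto (fun x : ℝ => Complex.exp (expIntegralE1 ((s - 1) * (Real.log x : ℂ))) *
          ∏ p ∈ Nat.primesBelow (⌊x⌋₊ + 1), (1 - (p : ℂ) ^ (-s))⁻¹) atTop (nhds (Complex.exp (EP.H s + EP.T s))) := by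
  have h := (EP.H_lim RH hs hs1).add (EP.T_lim hs)
  refine ((Complex.continuous_exp.tendsto _).comp h).congr fun x => ?_
  simp only [Function.comp]
  rw [add_comm (∑ p ∈ _, _) (expIntegralE1 _), add_assoc, ← Finset.sum_add_distrib, Complex.exp_add, Complex.exp_sum]
  congr 1
  refine Finset.prod_congr rfl fun p hp => ?_
  have hp' := Nat.prime_of_mem_primesBelow hp
  have h1 := EP.prime_norm_le hp' hs
  rw [EP.t, if_pos hp', add_sub_cancel, Complex.exp_log]
  apply inv_ne_zero
  intro h2
  rw [← sub_eq_zero.1 h2] at h1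
  norm_num at h1

lemma EP.zeta_eq_of_one_lt (RH : RiemannHypothesis) {s : ℂ} (hs : 1 < s.re) :
    riemannZeta s = Complex.exp (EP.H s + EP.T s) := by
  have hre : 0 < (s - 1).re := by simp; linarith
  have h1 := EP.main_lim RH (s := s) (by linarith) (Or.inl hre)
  have h2 := (Complex.continuous_exp.tendsto _).comp ((EP.E1_tendsto hre).comp Real.tendsto_log_atTop)
  have h3 := h2.mul ((riemannZeta_eulerProduct hs).comp EP.floor_tendsto)
  rw [Complex.exp_zero, one_mul] at h3
  exact tendsto_nhds_unique h3 h1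

def EP.U : Set ℂ := {s | 1/2 < s.re ∧ s - 1 ∈ Complex.slitPlane}

lemma EP.U_open : IsOpen EP.U :=
  (isOpen_lt continuous_const Complex.continuous_re).inter
    (Complex.isOpen_slitPlane.preimage (by fun_prop : Continuous fun s : ℂ => s - 1))

lemma EP.U_conn : IsPreconnected EP.U := by
  have hstar : StarConvex ℝ (2:ℂ) EP.U := by
    intro s hs a b ha hb hab
    refine ⟨?_, ?_⟩
    · have := hs.1
      simp
      rcases eq_or_lt_of_le ha with h | h
      · have : b = 1 := by linarith
        subst this; subst h; simp; simpa using hs.1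
      · nlinarith
    · have h1 := Complex.starConvex_one_slitPlane hs.2 ha hb hab
      convert! h1 using 1
      have : (a : ℂ) + b = 1 := by exact_mod_cast hab
      simp only [Complex.real_smul]
      linear_combination this
  exact (hstar.isPathConnected ⟨by norm_num, Or.inl (by norm_num)⟩).isConnected.isPreconnected

lemma EP.zeta_eq (RH : RiemannHypothesis) {s : ℂ} (hs : s ∈ EP.U) :
    riemannZeta s = Complex.exp (EP.H s + EP.T s) := by
  have hz : AnalyticOnNhd ℂ riemannZeta EP.U := by
    apply DifferentiableOn.analyticOnNhd _ EP.U_open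
    intro w hw
    apply (differentiableAt_riemannZeta _).differentiableWithinAt
    rintro rfl
    have := hw.2
    simp at this
  have hF : AnalyticOnNhd ℂ (fun s => Complex.exp (EP.H s + EP.T s)) EP.U := by
    apply DifferentiableOn.analyticOnNhd _ EP.U_open
    intro w hw
    exact ((EP.H_diff RH hw.1 hw.2).add (EP.T_diff hw.1)).cexp.differentiableWithinAt
  refine hz.eqOn_of_preconnected_of_eventuallyEq hF EP.U_conn (z₀ := 2) ?_ ?_ hs
  · refine ⟨by norm_num, Or.inl (by norm_num)⟩
  · filter_upwards [(isOpen_lt continuous_const Complex.continuous_re).mem_nhds (show (1:ℝ) < (2:ℂ).re by norm_num)] with w hw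
    exact EP.zeta_eq_of_one_lt RH hw

/-- Assuming RH, for `Re(s) > 1/2` with `s - 1` off the nonpositive real axis,
`ζ(s) = lim_{x→∞} exp(E₁((s-1)·log x)) · ∏_{p ≤ x} (1 - p^{-s})⁻¹`. -/
theorem euler_product_continuation (RH : RiemannHypothesis) (s : ℂ)
    (hs : 1 / 2 < s.re) (hs' : ¬∃ r : ℝ, r ≤ 0 ∧ s - 1 = (r : ℂ)) :
    Tendsto
      (fun x : ℝ =>
        Complex.exp (expIntegralE1 ((s - 1) * (Real.log x : ℂ))) *
          ∏ p ∈ Nat.primesBelow (⌊x⌋₊ + 1), (1 - (p : ℂ) ^ (-s))⁻¹)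
      atTop (nhds (riemannZeta s)) := by
  have hslit : s - 1 ∈ Complex.slitPlane := by
    rw [Complex.mem_slitPlane_iff]
    by_contra hcon
    push Not at hcon
    exact hs' ⟨(s - 1).re, hcon.1, Complex.ext (by simp) (by simpa using hcon.2)⟩
  rw [EP.zeta_eq RH ⟨hs, hslit⟩]
  exact EP.main_lim RH hs hslit
end

section
/- Mertens's third theorem: ∏_{p ≤ x, p prime} (1 - 1/p)^{-1} is asymptotic to e^{γ} · log x as x → ∞; equivalently, the limit as x → ∞ of (1/log x) · ∏_{p ≤ x, p prime} (1 - 1/p)^{-1} equals e^{γ}, where γ is the Euler–Mascheroni constant. -/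
open Filter

namespace MertensAux
open MeasureTheory Set

/-- `-log (1 - 1/p)`. -/
noncomputable def L (n : ℕ) : ℝ := -Real.log (1 - 1 / (n : ℝ))

lemma L_lower {n : ℕ} (hn : 2 ≤ n) : 1 / (n : ℝ) ≤ L n := by
  have h : (2 : ℝ) ≤ n := by exact_mod_cast hn
  have h1 : 1 / (n : ℝ) ≤ 1 / 2 := by gcongr
  have := Real.log_le_sub_one_of_pos (show 0 < 1 - 1 / (n : ℝ) by linarith)
  unfold L; linarith

lemma L_upper {n : ℕ} (hn : 2 ≤ n) : L n ≤ 1 / ((n : ℝ) - 1) := by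
  have h : (2 : ℝ) ≤ n := by exact_mod_cast hn
  have h1 : 1 / (n : ℝ) ≤ 1 / 2 := by gcongr
  have := Real.one_sub_inv_le_log_of_pos (show 0 < 1 - 1 / (n : ℝ) by linarith)
  unfold L
  have e : (1 - 1 / (n : ℝ))⁻¹ = 1 + 1 / ((n : ℝ) - 1) := by
    have : (n : ℝ) - 1 ≠ 0 := by linarith
    field_simp
    ring
  rw [e] at this; linarith

lemma log_factorial_eq (N : ℕ) : Real.log (N.factorial : ℝ) =
    ∑ p ∈ Nat.primesLE N, (N.factorial.factorization p : ℝ) * Real.log p := by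
  rw [Real.log_nat_eq_sum_factorization, Finsupp.sum]
  apply Finset.sum_subset
  · intro p hp
    rw [Nat.support_factorization, Nat.mem_primeFactors] at hp
    rw [Nat.primesLE, Nat.mem_primesBelow]
    exact ⟨Nat.lt_succ_of_le ((hp.1.dvd_factorial).1 hp.2.1), hp.1⟩
  · intro p _ hp
    simp [Finsupp.notMem_support_iff.1 hp]

lemma fact_lower {N p : ℕ} (hp : p.Prime) : (N : ℝ) / p - 1 ≤ N.factorial.factorization p := by
  have h1 : N / p ≤ N.factorial.factorization p := by
    rw [Nat.factorization_factorial hp (b := Nat.log p N + 2) (by omega)]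
    calc N / p = N / p ^ 1 := by simp
      _ ≤ _ := Finset.single_le_sum (f := fun i => N / p ^ i) (fun _ _ => Nat.zero_le _)
        (by simp)
  have h2 : (N : ℝ) / p < (N / p : ℕ) + 1 := by
    rw [div_lt_iff₀ (by exact_mod_cast hp.pos)]
    have := Nat.lt_mul_div_succ N hp.pos
    have h3 : (N : ℝ) < (p * (N / p + 1) : ℕ) := by exact_mod_cast this
    push_cast at h3 ⊢
    linarith
  have h3 : ((N / p : ℕ) : ℝ) ≤ N.factorial.factorization p := by exact_mod_cast h1
  linarith

lemma fact_upper {N p : ℕ} (hp : p.Prime) :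
    (N.factorial.factorization p : ℝ) ≤ (N : ℝ) / ((p : ℝ) - 1) := by
  have : Fact p.Prime := ⟨hp⟩
  have h := sub_one_mul_padicValNat_factorial (p := p) N
  have h1 : (p - 1) * N.factorial.factorization p ≤ N := by
    rw [Nat.factorization_def _ hp, h]; omega
  have h2 : (1 : ℝ) < p := by exact_mod_cast hp.one_lt
  rw [le_div_iff₀ (by linarith)]
  have h3 : (((p - 1) * N.factorial.factorization p : ℕ) : ℝ) ≤ N := by exact_mod_cast h1
  rw [Nat.cast_mul, Nat.cast_sub hp.one_lt.le] at h3
  push_cast at h3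
  linarith

lemma prime_of_LE {N p : ℕ} (h : p ∈ Nat.primesLE N) : p.Prime := (Nat.mem_primesBelow.1 h).2

lemma S1_le {N : ℕ} (hN : 1 ≤ N) :
    ∑ p ∈ Nat.primesLE N, Real.log p / p ≤ Real.log N + Real.log 4 := by
  have hN' : (0 : ℝ) < N := by exact_mod_cast hN
  have h1 : ∑ p ∈ Nat.primesLE N, ((N : ℝ) / p - 1) * Real.log p ≤ Real.log (N.factorial : ℝ) := by
    rw [log_factorial_eq]
    apply Finset.sum_le_sum
    intro p hp
    have := fact_lower (N := N) (prime_of_LE hp)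
    have := Real.log_natCast_nonneg p
    gcongr
  have h2 := Chebyshev.theta_le_log4_mul_x hN'.le
  rw [Chebyshev.theta_eq_sum_primesLE_log] at h2
  have h3 : Real.log (N.factorial : ℝ) ≤ N * Real.log N := by
    rw [← Real.log_pow]
    apply Real.log_le_log (by positivity)
    exact_mod_cast Nat.factorial_le_pow N
  have h4 : ∑ p ∈ Nat.primesLE N, ((N : ℝ) / p - 1) * Real.log p =
      N * ∑ p ∈ Nat.primesLE N, Real.log p / p - ∑ p ∈ Nat.primesLE N, Real.log p := by
    rw [Finset.mul_sum, ← Finset.sum_sub_distrib]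
    exact Finset.sum_congr rfl fun p _ => by ring
  have h5 : (N : ℝ) * ∑ p ∈ Nat.primesLE N, Real.log p / p ≤ N * (Real.log N + Real.log 4) := by
    linarith
  exact le_of_mul_le_mul_left h5 hN'

lemma S2_ge {N : ℕ} (hN : 1 ≤ N) :
    Real.log N - 1 ≤ ∑ p ∈ Nat.primesLE N, Real.log p / ((p : ℝ) - 1) := by
  have hN' : (0 : ℝ) < N := by exact_mod_cast hN
  have h1 : Real.log (N.factorial : ℝ) ≤
      N * ∑ p ∈ Nat.primesLE N, Real.log p / ((p : ℝ) - 1) := by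
    rw [log_factorial_eq, Finset.mul_sum]
    apply Finset.sum_le_sum
    intro p hp
    have h1 := fact_upper (N := N) (prime_of_LE hp)
    have h2 := Real.log_natCast_nonneg p
    calc _ ≤ (N : ℝ) / ((p : ℝ) - 1) * Real.log p := by gcongr
      _ = _ := by ring
  have h3 := Stirling.le_log_factorial_stirling (n := N) (by omega)
  have h4 : 0 ≤ Real.log N := Real.log_natCast_nonneg N
  have h5 : 0 ≤ Real.log (2 * Real.pi) := Real.log_nonneg (by linarith [Real.pi_gt_three])
  have h6 : (N : ℝ) * (Real.log N - 1) ≤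
      N * ∑ p ∈ Nat.primesLE N, Real.log p / ((p : ℝ) - 1) := by linarith
  exact le_of_mul_le_mul_left h6 hN'

lemma diff_bound {n : ℕ} (hn : 2 ≤ n) :
    Real.log n / ((n : ℝ) - 1) - Real.log n / n ≤ 4 * (1 / (n : ℝ) ^ (3 / 2 : ℝ)) := by
  have h : (2 : ℝ) ≤ n := by exact_mod_cast hn
  have h0 : (0 : ℝ) < n := by linarith
  have h1 := Real.log_le_rpow_div h0.le (show (0 : ℝ) < 1 / 2 by norm_num)
  have h2 : Real.log n / ((n : ℝ) - 1) - Real.log n / n = Real.log n / (((n : ℝ) - 1) * n) := by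
    have : (n : ℝ) - 1 ≠ 0 := by linarith
    field_simp
    ring
  have h3 : (n : ℝ) ^ (1 / 2 : ℝ) * (n : ℝ) ^ (3 / 2 : ℝ) = n * n := by
    rw [← Real.rpow_add h0]; norm_num; ring
  have h4 : 0 < (n : ℝ) ^ (3 / 2 : ℝ) := by positivity
  rw [h2, mul_one_div, div_le_div_iff₀ (by nlinarith) h4]
  calc Real.log n * (n : ℝ) ^ (3 / 2 : ℝ)
      ≤ ((n : ℝ) ^ (1 / 2 : ℝ) / (1 / 2)) * (n : ℝ) ^ (3 / 2 : ℝ) := by gcongr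
    _ = 2 * (n * n) := by rw [← h3]; ring
    _ ≤ _ := by nlinarith

lemma mertens_nat : ∃ C : ℝ, 0 ≤ C ∧ ∀ N : ℕ, 1 ≤ N →
    |∑ p ∈ Nat.primesLE N, Real.log p * L p - Real.log N| ≤ C := by
  have hs : Summable fun n : ℕ => 4 * (1 / (n : ℝ) ^ (3 / 2 : ℝ)) :=
    (Real.summable_one_div_nat_rpow.2 (by norm_num)).mul_left 4
  set C0 := ∑' n : ℕ, 4 * (1 / (n : ℝ) ^ (3 / 2 : ℝ)) with hC0
  have hC0' : 0 ≤ C0 := tsum_nonneg fun n => by positivity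
  have hl4 : 0 ≤ Real.log 4 := Real.log_nonneg (by norm_num)
  refine ⟨C0 + Real.log 4 + 1, by positivity, fun N hN => ?_⟩
  have h1 := S1_le hN
  have h2 := S2_ge hN
  have h3 : ∑ p ∈ Nat.primesLE N, Real.log p / ((p : ℝ) - 1) -
      ∑ p ∈ Nat.primesLE N, Real.log p / p ≤ C0 := by
    rw [← Finset.sum_sub_distrib]
    calc _ ≤ ∑ p ∈ Nat.primesLE N, 4 * (1 / (p : ℝ) ^ (3 / 2 : ℝ)) :=
          Finset.sum_le_sum fun p hp => diff_bound (prime_of_LE hp).two_le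
      _ ≤ C0 := hs.sum_le_tsum _ fun _ _ => by positivity
  have h4 : ∑ p ∈ Nat.primesLE N, Real.log p / p ≤ ∑ p ∈ Nat.primesLE N, Real.log p * L p := by
    refine Finset.sum_le_sum fun p hp => ?_
    have := L_lower (prime_of_LE hp).two_le
    have := Real.log_natCast_nonneg p
    rw [div_eq_mul_one_div]; gcongr
  have h5 : ∑ p ∈ Nat.primesLE N, Real.log p * L p ≤
      ∑ p ∈ Nat.primesLE N, Real.log p / ((p : ℝ) - 1) := by
    refine Finset.sum_le_sum fun p hp => ?_
    have := L_upper (prime_of_LE hp).two_le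
    have := Real.log_natCast_nonneg p
    rw [div_eq_mul_one_div]; gcongr
  rw [abs_le]; constructor <;> linarith

/-- The partial sum in the exponential scale. -/
noncomputable def A (t : ℝ) : ℝ := ∑ p ∈ Nat.primesLE ⌊Real.exp t⌋₊, Real.log p * L p

lemma w_nonneg {p : ℕ} (hp : p.Prime) : 0 ≤ Real.log p * L p := by
  have := L_lower hp.two_le
  have h2 : 0 ≤ 1 / (p : ℝ) := by positivity
  exact mul_nonneg (Real.log_natCast_nonneg p) (h2.trans this)

lemma A_mono : Monotone A := by
  intro s t hst
  apply Finset.sum_le_sum_of_subset_of_nonneg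
  · intro p hp
    rw [Nat.primesLE, Nat.mem_primesBelow] at hp ⊢
    have : ⌊Real.exp s⌋₊ ≤ ⌊Real.exp t⌋₊ := Nat.floor_mono (Real.exp_le_exp.2 hst)
    exact ⟨by omega, hp.2⟩
  · intro p hp _
    exact w_nonneg (prime_of_LE hp)

/-- The discrepancy. -/
noncomputable def D (t : ℝ) : ℝ := A t - ⌊t⌋₊

lemma D_meas : Measurable D :=
  A_mono.measurable.sub (measurable_from_nat.comp Nat.measurable_floor)

lemma D_bdd : ∃ C : ℝ, 0 ≤ C ∧ ∀ t : ℝ, 0 ≤ t → |D t| ≤ C := by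
  obtain ⟨C, hC, h⟩ := mertens_nat
  refine ⟨C + 2, by positivity, fun t ht => ?_⟩
  have he : 1 ≤ Real.exp t := Real.one_le_exp ht
  have hN : 1 ≤ ⌊Real.exp t⌋₊ := Nat.le_floor (by simpa using he)
  have h1 := h _ hN
  have hN' : (1 : ℝ) ≤ ⌊Real.exp t⌋₊ := by exact_mod_cast hN
  have h2 : Real.log ⌊Real.exp t⌋₊ ≤ t := by
    rw [Real.log_le_iff_le_exp (by linarith)]
    exact Nat.floor_le (by positivity)
  have h3 : t ≤ Real.log ⌊Real.exp t⌋₊ + 1 := by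
    rw [← Real.exp_le_exp, Real.exp_add, Real.exp_log (by linarith)]
    have := Nat.lt_floor_add_one (Real.exp t)
    have := Real.add_one_le_exp 1
    nlinarith
  have h4 := Nat.floor_le ht
  have h5 := Nat.lt_floor_add_one t
  unfold D A
  rw [abs_le] at h1 ⊢
  constructor <;> linarith [h1.1, h1.2]

/-- Abstract partial summation. -/
lemma abel_abs {ι : Type*} [Countable ι] (w τ : ι → ℝ) (φ ψ : ℝ → ℝ)
    (hτ : ∀ i, w i ≠ 0 → 1 / 2 < τ i) (hψ : ∀ t, 1 / 2 < t → 0 ≤ ψ t)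
    (hi : ∀ s, 1 / 2 < s → IntegrableOn ψ (Ioi s)) (hφ : ∀ s, 1 / 2 < s → ∫ t in Ioi s, ψ t = φ s)
    (hs : Summable fun i => w i * φ (τ i)) :
    ∑' i, w i * φ (τ i) = ∫ t in Ioi (1 / 2 : ℝ), (∑' i, if τ i ≤ t then w i else 0) * ψ t := by
  have key : ∀ i, (fun t => (if τ i ≤ t then w i else 0) * ψ t) =
      (Ici (τ i)).indicator (fun t => w i * ψ t) := by
    intro i; ext t
    simp [Set.indicator_apply, ite_mul]
  have hsub : ∀ i, w i ≠ 0 → Ioi (1 / 2 : ℝ) ∩ Ici (τ i) = Ici (τ i) := fun i h => by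
    apply inter_eq_right.2
    intro t ht
    exact lt_of_lt_of_le (hτ i h) ht
  have hInt : ∀ i, Integrable (fun t => (if τ i ≤ t then w i else 0) * ψ t)
      (volume.restrict (Ioi (1 / 2))) := by
    intro i
    by_cases h : w i = 0
    · simp [h]
    rw [key, integrable_indicator_iff measurableSet_Ici, IntegrableOn,
      Measure.restrict_restrict measurableSet_Ici, inter_comm, hsub i h]
    exact ((integrableOn_Ici_iff_integrableOn_Ioi).2 (hi _ (hτ i h))).const_mul _
  have hval : ∀ i, ∫ t in Ioi (1 / 2 : ℝ), (if τ i ≤ t then w i else 0) * ψ t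
      = w i * φ (τ i) := by
    intro i
    by_cases h : w i = 0
    · simp [h]
    rw [key, setIntegral_indicator measurableSet_Ici, hsub i h, integral_Ici_eq_integral_Ioi,
      integral_const_mul, hφ _ (hτ i h)]
  have hnorm : ∀ i, ∫ t in Ioi (1 / 2 : ℝ), ‖(if τ i ≤ t then w i else 0) * ψ t‖
      = ‖w i * φ (τ i)‖ := by
    intro i
    by_cases h : w i = 0
    · simp [h]
    have hφ0 : 0 ≤ φ (τ i) := by
      rw [← hφ _ (hτ i h)]
      exact setIntegral_nonneg measurableSet_Ioi fun t ht => hψ t ((hτ i h).trans ht)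
    have e : ∀ t ∈ Ioi (1 / 2 : ℝ), ‖(if τ i ≤ t then w i else 0) * ψ t‖ =
        (Ici (τ i)).indicator (fun t => |w i| * ψ t) t := by
      intro t ht
      by_cases h' : τ i ≤ t <;> simp [h', abs_of_nonneg (hψ t ht)]
    rw [setIntegral_congr_fun measurableSet_Ioi e,
      setIntegral_indicator measurableSet_Ici, hsub i h, integral_Ici_eq_integral_Ioi,
      integral_const_mul, hφ _ (hτ i h), Real.norm_eq_abs, abs_mul, abs_of_nonneg hφ0]
  have := hasSum_integral_of_summable_integral_norm hInt (by simpa only [hnorm] using hs.norm)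
  simp only [hval] at this
  rw [this.tsum_eq]
  simp only [tsum_mul_right]


/-- Combined weights. -/
noncomputable def W : ℕ ⊕ ℕ → ℝ :=
  Sum.elim (fun n => if n.Prime then Real.log n * L n else 0) (fun _ => -1)

/-- Combined positions. -/
noncomputable def τ : ℕ ⊕ ℕ → ℝ := Sum.elim (fun n => Real.log n) (fun k => (k : ℝ) + 1)

lemma log_prime_gt {p : ℕ} (hp : p.Prime) : 1 / 2 < Real.log p := by
  have h : (2 : ℝ) ≤ p := by exact_mod_cast hp.two_le
  have := Real.log_le_log (by norm_num) h
  linarith [Real.log_two_gt_d9]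

lemma τ_gt (i : ℕ ⊕ ℕ) (h : W i ≠ 0) : 1 / 2 < τ i := by
  rcases i with n | k
  · have hp : n.Prime := by
      by_contra hn
      simp [W, hn] at h
    simpa [τ] using log_prime_gt hp
  · simp only [τ, Sum.elim_inr]
    have : (0 : ℝ) ≤ k := by positivity
    linarith

lemma hasSum_trunc (g : ℝ → ℝ) (t : ℝ) :
    HasSum (fun i => if τ i ≤ t then W i * g (τ i) else 0)
      (∑ p ∈ Nat.primesLE ⌊Real.exp t⌋₊, Real.log p * L p * g (Real.log p)
        + ∑ k ∈ Finset.range ⌊t⌋₊, -g ((k : ℝ) + 1)) := by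
  apply HasSum.sum
  · have : ∑ p ∈ Nat.primesLE ⌊Real.exp t⌋₊, Real.log p * L p * g (Real.log p) =
        ∑ p ∈ Nat.primesLE ⌊Real.exp t⌋₊, ((fun i => if τ i ≤ t then W i * g (τ i) else 0) ∘
          Sum.inl) p := by
      refine Finset.sum_congr rfl fun p hp => ?_
      have hpp := prime_of_LE hp
      have hle : p ≤ ⌊Real.exp t⌋₊ := by
        rw [Nat.primesLE, Nat.mem_primesBelow] at hp; omega
      have : Real.log p ≤ t := by
        rw [Real.log_le_iff_le_exp (by exact_mod_cast hpp.pos)]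
        exact (Nat.le_floor_iff (by positivity)).1 hle
      simp [τ, W, hpp, this]
    rw [this]
    apply hasSum_sum_of_ne_finset_zero
    intro p hp
    by_cases hpp : p.Prime
    · have : ¬ Real.log p ≤ t := by
        intro h
        rw [Real.log_le_iff_le_exp (by exact_mod_cast hpp.pos)] at h
        apply hp
        rw [Nat.primesLE, Nat.mem_primesBelow]
        exact ⟨Nat.lt_succ_of_le (Nat.le_floor h), hpp⟩
      simp [τ, this]
    · simp [W, hpp]
  · have : ∑ k ∈ Finset.range ⌊t⌋₊, -g ((k : ℝ) + 1) =
        ∑ k ∈ Finset.range ⌊t⌋₊, ((fun i => if τ i ≤ t then W i * g (τ i) else 0) ∘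
          Sum.inr) k := by
      refine Finset.sum_congr rfl fun k hk => ?_
      have hk' : k + 1 ≤ ⌊t⌋₊ := by simpa using hk
      have := (Nat.le_floor_iff' (by omega)).1 hk'
      push_cast at this
      simp [τ, W, this]
    rw [this]
    apply hasSum_sum_of_ne_finset_zero
    intro k hk
    have : ¬ ((k : ℝ) + 1 ≤ t) := by
      intro h
      apply hk
      have := (Nat.le_floor_iff' (n := k + 1) (a := t) (by omega)).2 (by push_cast; exact h)
      simpa using this
    simp [τ, this]

lemma tsum_eq_D (t : ℝ) : (∑' i, if τ i ≤ t then W i else 0) = D t := by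
  have := hasSum_trunc (fun _ => 1) t
  simp only [mul_one] at this
  rw [this.tsum_eq]
  simp [D, A, sub_eq_add_neg]

/-- The log of the product. -/
noncomputable def P (t : ℝ) : ℝ := ∑ p ∈ Nat.primesLE ⌊Real.exp t⌋₊, L p

lemma app_two {T : ℝ} (hT : 1 / 2 < T) :
    P T - harmonic ⌊T⌋₊ - D T / T =
      ∫ t in Ioi (1 / 2 : ℝ), D t * (if t ≤ T then 1 / t ^ 2 else 0) := by
  have hform : ∀ i, W i * (if τ i ≤ T then 1 / τ i - 1 / T else 0) =
      if τ i ≤ T then W i * (1 / τ i - 1 / T) else 0 := fun i => by split_ifs <;> simp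
  have hsum := hasSum_trunc (fun s => 1 / s - 1 / T) T
  have hind : ∀ s : ℝ, 1 / 2 < s → IntegrableOn (fun t : ℝ => 1 / t ^ 2) (Ioc s T) := by
    intro s hs
    apply (ContinuousOn.integrableOn_Icc (a := s) (b := T) _).mono_set Ioc_subset_Icc_self
    apply ContinuousOn.div continuousOn_const (by fun_prop)
    intro t ht
    have : 0 < t := by linarith [ht.1]
    positivity
  have hfun : (fun t : ℝ => if t ≤ T then 1 / t ^ 2 else 0) =
      (Iic T).indicator (fun t : ℝ => 1 / t ^ 2) := by
    ext t; simp [Set.indicator_apply]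
  have h := abel_abs W τ (fun s => if s ≤ T then 1 / s - 1 / T else 0)
    (fun t => if t ≤ T then 1 / t ^ 2 else 0) τ_gt
    (fun t _ => by split_ifs <;> positivity)
    (fun s hs => by
      rw [hfun, IntegrableOn, integrable_indicator_iff measurableSet_Iic, IntegrableOn,
        Measure.restrict_restrict measurableSet_Iic, inter_comm, Ioi_inter_Iic]
      exact hind s hs)
    (fun s hs => by
      rw [hfun, setIntegral_indicator measurableSet_Iic, Ioi_inter_Iic]
      split_ifs with hsT
      · rw [← intervalIntegral.integral_of_le hsT]
        rw [intervalIntegral.integral_eq_sub_of_hasDerivAt (f := fun t : ℝ => -(1 / t))]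
        · ring
        · intro t ht
          rw [uIcc_of_le hsT] at ht
          have : t ≠ 0 := by linarith [ht.1]
          have := (hasDerivAt_inv this).neg
          have := this.congr_deriv (g' := 1 / t ^ 2) (by simp)
          simp only [one_div] at this ⊢
          exact this
        · rw [intervalIntegrable_iff_integrableOn_Ioc_of_le hsT]
          exact hind s hs
      · rw [Ioc_eq_empty (by linarith), Measure.restrict_empty, integral_zero_measure])
    (by simp only [hform]; exact hsum.summable)
  simp only [tsum_eq_D, hform] at h
  rw [← h, hsum.tsum_eq]
  have e1 : ∑ p ∈ Nat.primesLE ⌊Real.exp T⌋₊, Real.log p * L p * (1 / Real.log p - 1 / T) =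
      P T - A T / T := by
    rw [P, A, Finset.sum_div, ← Finset.sum_sub_distrib]
    refine Finset.sum_congr rfl fun p hp => ?_
    have : Real.log p ≠ 0 := by linarith [log_prime_gt (prime_of_LE hp)]
    field_simp
  have e2 : ∑ k ∈ Finset.range ⌊T⌋₊, -(1 / ((k : ℝ) + 1) - 1 / T) =
      -(harmonic ⌊T⌋₊ : ℝ) + ⌊T⌋₊ / T := by
    rw [harmonic]
    push_cast
    rw [Finset.sum_neg_distrib, Finset.sum_sub_distrib]
    simp
    ring
  simp only [e1, e2, D]
  ring

/-- Dirichlet-type series over the primes. -/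
noncomputable def B (δ : ℝ) : ℝ :=
  ∑' n : ℕ, if n.Prime then L n * Real.exp (-δ * Real.log n) else 0

lemma exp_log_le {δ : ℝ} (hδ : 0 < δ) {n : ℕ} : Real.exp (-δ * Real.log n) ≤ 1 := by
  rw [Real.exp_le_one_iff]
  have := Real.log_natCast_nonneg n
  nlinarith

lemma exp_div_eq {δ : ℝ} {n : ℕ} (hn : n ≠ 0) :
    Real.exp (-δ * Real.log n) / n = (n : ℝ) ^ (-(1 + δ)) := by
  have : (0 : ℝ) < n := by positivity
  rw [Real.rpow_def_of_pos this]
  have e : Real.log n * (-(1 + δ)) = -δ * Real.log n - Real.log n := by ring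
  rw [e, Real.exp_sub, Real.exp_log this]

lemma B_summable {δ : ℝ} (hδ : 0 < δ) :
    Summable fun n : ℕ => if n.Prime then L n * Real.exp (-δ * Real.log n) else 0 := by
  have hs : Summable fun n : ℕ => 2 * (n : ℝ) ^ (-(1 + δ)) :=
    (Real.summable_nat_rpow.2 (by linarith)).mul_left 2
  refine hs.of_nonneg_of_le (fun n => ?_) (fun n => ?_)
  · split_ifs with hp
    · have := L_lower hp.two_le
      have h2 : 0 ≤ 1 / (n : ℝ) := by positivity
      exact mul_nonneg (h2.trans this) (Real.exp_pos _).le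
    · rfl
  · split_ifs with hp
    · rw [← exp_div_eq hp.ne_zero]
      have h1 := L_upper hp.two_le
      have h : (2 : ℝ) ≤ n := by exact_mod_cast hp.two_le
      have h2 : 1 / ((n : ℝ) - 1) ≤ 2 / n := by
        rw [div_le_div_iff₀ (by linarith) (by linarith)]; linarith
      calc _ ≤ (2 / n) * Real.exp (-δ * Real.log n) := by gcongr; linarith
        _ = _ := by ring
    · positivity

lemma app_one {δ : ℝ} (hδ : 0 < δ) :
    B δ + Real.log (1 - Real.exp (-δ)) =
      ∫ t in Ioi (1 / 2 : ℝ), D t * (Real.exp (-δ * t) * (δ / t + 1 / t ^ 2)) := by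
  have hinl : HasSum ((fun i => W i * (Real.exp (-δ * τ i) / τ i)) ∘ Sum.inl) (B δ) := by
    refine HasSum.congr_fun (B_summable hδ).hasSum fun n => ?_
    simp only [Function.comp, W, τ, Sum.elim_inl]
    split_ifs with hp
    · have : Real.log n ≠ 0 := by linarith [log_prime_gt hp]
      field_simp
    · simp
  have hinr : HasSum ((fun i => W i * (Real.exp (-δ * τ i) / τ i)) ∘ Sum.inr)
      (Real.log (1 - Real.exp (-δ))) := by
    have habs : |Real.exp (-δ)| < 1 := by
      rw [abs_of_pos (Real.exp_pos _), Real.exp_lt_one_iff]; linarith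
    have := (Real.hasSum_pow_div_log_of_abs_lt_one habs).neg
    rw [neg_neg] at this
    refine HasSum.congr_fun this fun k => ?_
    simp only [Function.comp, W, τ, Sum.elim_inr]
    rw [← Real.exp_nat_mul]
    push_cast
    rw [show ((k : ℝ) + 1) * -δ = -δ * (k + 1) by ring]
    ring
  have hsum := hinl.sum hinr
  have hder : ∀ s : ℝ, 1 / 2 < s → ∀ t ∈ Ici s, HasDerivAt (fun t => -(Real.exp (-δ * t) / t))
      (Real.exp (-δ * t) * (δ / t + 1 / t ^ 2)) t := by
    intro s hs t ht
    have ht' : s ≤ t := ht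
    have h0 : t ≠ 0 := by linarith
    have h1 : HasDerivAt (fun t : ℝ => Real.exp (-δ * t)) (Real.exp (-δ * t) * (-δ * 1)) t :=
      ((hasDerivAt_id t).const_mul (-δ)).exp
    have h2 := (h1.div (hasDerivAt_id t) h0).neg
    refine HasDerivAt.congr_deriv h2 ?_
    simp only [id]
    field_simp
    ring
  have hlim : Tendsto (fun t => -(Real.exp (-δ * t) / t)) atTop (nhds 0) := by
    have h1 : Tendsto (fun t : ℝ => Real.exp (-δ * t)) atTop (nhds 0) := by
      apply Real.tendsto_exp_atBot.comp
      exact tendsto_id.const_mul_atTop_of_neg (by linarith)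
    have := (h1.mul tendsto_inv_atTop_zero).neg
    simpa [div_eq_mul_inv] using this
  have hnn : ∀ t : ℝ, 1 / 2 < t → 0 ≤ Real.exp (-δ * t) * (δ / t + 1 / t ^ 2) := by
    intro t ht
    have : 0 < t := by linarith
    positivity
  have h := abel_abs W τ (fun s => Real.exp (-δ * s) / s)
    (fun t => Real.exp (-δ * t) * (δ / t + 1 / t ^ 2)) τ_gt hnn
    (fun s hs => integrableOn_Ioi_deriv_of_nonneg' (hder s hs)
      (fun t ht => hnn t (hs.trans ht)) hlim)
    (fun s hs => by
      rw [integral_Ioi_of_hasDerivAt_of_nonneg' (hder s hs)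
        (fun t ht => hnn t (hs.trans ht)) hlim]; ring)
    hsum.summable
  simp only [tsum_eq_D] at h
  rw [← h, hsum.tsum_eq]

lemma int_bound (C : ℝ) : Integrable (fun t : ℝ => C * (2 / t ^ 2))
    (volume.restrict (Ioi (1 / 2))) := by
  have h := integrableOn_Ioi_rpow_of_lt (show (-2 : ℝ) < -1 by norm_num)
    (show (0 : ℝ) < 1 / 2 by norm_num)
  have h2 := (Integrable.const_mul h (C * 2))
  refine h2.congr ?_
  refine (ae_restrict_mem measurableSet_Ioi).mono fun t ht => ?_
  have : 0 < t := by linarith [show (1 / 2 : ℝ) < t from ht]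
  simp only
  rw [Real.rpow_neg this.le]
  norm_num
  ring

/-- The limiting integral. -/
noncomputable def S : ℝ := ∫ t in Ioi (1 / 2 : ℝ), D t * (1 / t ^ 2)

lemma lim_two : Tendsto (fun T : ℝ => ∫ t in Ioi (1 / 2 : ℝ), D t * (if t ≤ T then 1 / t ^ 2 else 0))
    atTop (nhds S) := by
  obtain ⟨C, hC, hD⟩ := D_bdd
  apply tendsto_integral_filter_of_dominated_convergence (fun t : ℝ => C * (2 / t ^ 2))
  · refine Eventually.of_forall fun T => Measurable.aestronglyMeasurable ?_
    apply D_meas.mul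
    apply Measurable.ite measurableSet_Iic
    · fun_prop
    · fun_prop
  · refine Eventually.of_forall fun T => (ae_restrict_mem measurableSet_Ioi).mono fun t ht => ?_
    have ht : 0 < t := by linarith [show (1 / 2 : ℝ) < t from ht]
    rw [norm_mul]
    gcongr
    · exact hD t ht.le
    · split_ifs
      · rw [Real.norm_of_nonneg (by positivity)]; gcongr; norm_num
      · simp; positivity
  · exact int_bound C
  · refine Eventually.of_forall fun t => ?_
    apply tendsto_const_nhds.congr'
    filter_upwards [eventually_ge_atTop t] with T hT
    simp [hT]

lemma lim_one : Tendsto (fun δ : ℝ => ∫ t in Ioi (1 / 2 : ℝ),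
      D t * (Real.exp (-δ * t) * (δ / t + 1 / t ^ 2))) (nhdsWithin 0 (Ioi 0)) (nhds S) := by
  obtain ⟨C, hC, hD⟩ := D_bdd
  apply tendsto_integral_filter_of_dominated_convergence (fun t : ℝ => C * (2 / t ^ 2))
  · refine Eventually.of_forall fun T => Measurable.aestronglyMeasurable ?_
    apply D_meas.mul
    fun_prop
  · filter_upwards [self_mem_nhdsWithin] with δ hδ
    have hδ : 0 < δ := hδ
    refine (ae_restrict_mem measurableSet_Ioi).mono fun t ht => ?_
    have ht : 0 < t := by linarith [show (1 / 2 : ℝ) < t from ht]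
    rw [norm_mul]
    gcongr
    · exact hD t ht.le
    · rw [Real.norm_of_nonneg (by positivity)]
      have e1 : Real.exp (-δ * t) * (1 + δ * t) ≤ 1 := by
        have := Real.add_one_le_exp (δ * t)
        rw [neg_mul, Real.exp_neg, inv_mul_le_iff₀ (Real.exp_pos _)]
        linarith
      have e2 : Real.exp (-δ * t) * (δ / t + 1 / t ^ 2) =
          Real.exp (-δ * t) * (1 + δ * t) / t ^ 2 := by
        field_simp
        ring
      rw [e2]
      gcongr
      linarith
  · exact int_bound C
  · refine (ae_restrict_mem measurableSet_Ioi).mono fun t ht => ?_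
    have : ContinuousAt (fun δ : ℝ => D t * (Real.exp (-δ * t) * (δ / t + 1 / t ^ 2))) 0 := by
      fun_prop
    have := this.tendsto
    simp only [neg_zero, zero_mul, Real.exp_zero, zero_div, zero_add, one_mul] at this
    exact this.mono_left nhdsWithin_le_nhds

/-- `log ζ(1+δ)` as a sum over primes. -/
noncomputable def Z (δ : ℝ) : ℝ :=
  ∑' n : ℕ, if n.Prime then -Real.log (1 - Real.exp (-δ * Real.log n) / n) else 0

lemma log_est {y : ℝ} (h0 : 0 ≤ y) (h1 : y ≤ 1 / 2) : |y + Real.log (1 - y)| ≤ 2 * y ^ 2 := by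
  have h := Real.abs_log_sub_add_sum_range_le (x := y) (by rw [abs_of_nonneg h0]; linarith) 1
  simp only [Finset.sum_range_one, abs_of_nonneg h0] at h
  norm_num at h
  refine h.trans ?_
  rw [div_le_iff₀ (by linarith)]
  nlinarith [sq_nonneg y]

lemma term_est {δ : ℝ} (hδ : 0 < δ) {n : ℕ} (hn : 2 ≤ n) :
    |L n * Real.exp (-δ * Real.log n) + Real.log (1 - Real.exp (-δ * Real.log n) / n)|
      ≤ 4 * (1 / (n : ℝ) ^ 2) := by
  have h : (2 : ℝ) ≤ n := by exact_mod_cast hn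
  set E := Real.exp (-δ * Real.log n) with hE
  have hE0 : 0 < E := Real.exp_pos _
  have hE1 : E ≤ 1 := exp_log_le hδ
  have hy : 1 / (n : ℝ) ≤ 1 / 2 := by gcongr
  have hy0 : 0 ≤ 1 / (n : ℝ) := by positivity
  have hz : E / n ≤ 1 / n := by gcongr
  have hz0 : 0 ≤ E / n := by positivity
  have a1 := log_est hy0 hy
  have a2 := log_est hz0 (hz.trans hy)
  have e : L n * E + Real.log (1 - E / n) =
      -(1 / (n : ℝ) + Real.log (1 - 1 / n)) * E + (E / n + Real.log (1 - E / n)) := by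
    unfold L; ring
  rw [e]
  refine (abs_add_le _ _).trans ?_
  rw [abs_mul, abs_neg, abs_of_pos hE0]
  have b1 : |1 / (n : ℝ) + Real.log (1 - 1 / n)| * E ≤ 2 * (1 / (n : ℝ)) ^ 2 := by
    calc _ ≤ |1 / (n : ℝ) + Real.log (1 - 1 / n)| * 1 := by gcongr
      _ ≤ _ := by rw [mul_one]; exact a1
  have b2 : 2 * (E / n) ^ 2 ≤ 2 * (1 / (n : ℝ)) ^ 2 := by gcongr
  have : (1 / (n : ℝ)) ^ 2 = 1 / (n : ℝ) ^ 2 := by rw [one_div_pow]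
  linarith

lemma bound_summable : Summable fun n : ℕ => 4 * (1 / (n : ℝ) ^ 2) :=
  (Real.summable_one_div_nat_pow.2 (by norm_num)).mul_left 4

lemma diff_summable {δ : ℝ} (hδ : 0 < δ) : Summable fun n : ℕ => if n.Prime then
    L n * Real.exp (-δ * Real.log n) + Real.log (1 - Real.exp (-δ * Real.log n) / n) else 0 := by
  refine Summable.of_norm_bounded bound_summable fun n => ?_
  split_ifs with hp
  · exact term_est hδ hp.two_le
  · simp

lemma Z_summable {δ : ℝ} (hδ : 0 < δ) : Summable fun n : ℕ =>
    if n.Prime then -Real.log (1 - Real.exp (-δ * Real.log n) / n) else 0 := by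
  have := (B_summable hδ).sub (diff_summable hδ)
  refine this.congr fun n => ?_
  split_ifs <;> ring

lemma B_sub_Z : Tendsto (fun δ => B δ - Z δ) (nhdsWithin 0 (Ioi 0)) (nhds 0) := by
  have h : Tendsto (fun δ : ℝ => ∑' n : ℕ, if n.Prime then
      L n * Real.exp (-δ * Real.log n) + Real.log (1 - Real.exp (-δ * Real.log n) / n) else 0)
      (nhdsWithin 0 (Ioi 0)) (nhds (∑' _ : ℕ, (0 : ℝ))) := by
    apply tendsto_tsum_of_dominated_convergence bound_summable
    · intro n
      split_ifs with hp
      · have h : (2 : ℝ) ≤ n := by exact_mod_cast hp.two_le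
        have hy : 1 / (n : ℝ) ≤ 1 / 2 := by gcongr
        have : ContinuousAt (fun δ : ℝ => L n * Real.exp (-δ * Real.log n) +
            Real.log (1 - Real.exp (-δ * Real.log n) / n)) 0 := by
          apply ContinuousAt.add (by fun_prop)
          apply ContinuousAt.log (by fun_prop)
          simp only [neg_zero, zero_mul, Real.exp_zero]
          linarith
        have := this.tendsto
        simp only [neg_zero, zero_mul, Real.exp_zero, mul_one] at this
        rw [L, neg_add_cancel] at this
        exact this.mono_left nhdsWithin_le_nhds
      · exact tendsto_const_nhds
    · filter_upwards [self_mem_nhdsWithin] with δ hδ n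
      split_ifs with hp
      · exact term_est hδ hp.two_le
      · simp
  rw [tsum_zero] at h
  refine h.congr' ?_
  filter_upwards [self_mem_nhdsWithin] with δ hδ
  rw [B, Z, ← (B_summable hδ).tsum_sub (Z_summable hδ)]
  refine tsum_congr fun n => ?_
  split_ifs <;> ring

lemma exp_Z {δ : ℝ} (hδ : 0 < δ) : ((Real.exp (Z δ) : ℝ) : ℂ) = riemannZeta (1 + δ) := by
  rw [← riemannZeta_eulerProduct_exp_log (by simpa using hδ), Complex.ofReal_exp]
  congr 1
  have h1 : Z δ = ∑' p : Nat.Primes, -Real.log (1 - Real.exp (-δ * Real.log (p : ℕ)) / (p : ℕ)) := by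
    have := tsum_subtype {p : ℕ | p.Prime}
      (fun n : ℕ => -Real.log (1 - Real.exp (-δ * Real.log n) / n))
    rw [Z]
    refine Eq.trans ?_ this.symm
    refine tsum_congr fun n => ?_
    simp [Set.indicator_apply]
  rw [h1, Complex.ofReal_tsum]
  refine tsum_congr fun p => ?_
  have hp := p.2
  have h : (2 : ℝ) ≤ (p : ℕ) := by exact_mod_cast hp.two_le
  have hy : 1 / ((p : ℕ) : ℝ) ≤ 1 / 2 := by gcongr
  have hz : Real.exp (-δ * Real.log (p : ℕ)) / (p : ℕ) ≤ 1 / (p : ℕ) := by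
    gcongr; exact exp_log_le hδ
  rw [Complex.ofReal_neg, Complex.ofReal_log (by linarith), exp_div_eq hp.ne_zero]
  push_cast
  rw [Complex.ofReal_cpow (by positivity)]
  push_cast
  rfl

lemma Z_lim : Tendsto (fun δ => δ * Real.exp (Z δ)) (nhdsWithin 0 (Ioi 0)) (nhds 1) := by
  have h1 : Tendsto (fun δ : ℝ => (1 + δ : ℂ)) (nhdsWithin 0 (Ioi 0)) (nhdsWithin 1 {1}ᶜ) := by
    apply tendsto_nhdsWithin_of_tendsto_nhds_of_eventually_within
    · have : ContinuousAt (fun δ : ℝ => (1 + δ : ℂ)) 0 := by fun_prop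
      have := this.tendsto
      simp only [Complex.ofReal_zero, add_zero] at this
      exact this.mono_left nhdsWithin_le_nhds
    · filter_upwards [self_mem_nhdsWithin] with δ hδ
      have : δ ≠ 0 := ne_of_gt hδ
      simpa using this
  have h2 := riemannZeta_residue_one.comp h1
  have h3 := (Complex.continuous_re.tendsto _).comp h2
  simp only [Complex.one_re] at h3
  refine h3.congr' ?_
  filter_upwards [self_mem_nhdsWithin] with δ hδ
  simp only [Function.comp, ← exp_Z hδ, add_sub_cancel_left]
  rw [← Complex.ofReal_mul, Complex.ofReal_re]

lemma one_sub_exp_lim :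
    Tendsto (fun δ : ℝ => (1 - Real.exp (-δ)) / δ) (nhdsWithin 0 (Ioi 0)) (nhds 1) := by
  have h : HasDerivAt (fun δ : ℝ => 1 - Real.exp (-δ)) 1 0 := by
    have := ((hasDerivAt_id (0 : ℝ)).neg.exp).const_sub 1
    simpa using this
  have := h.tendsto_slope_zero_right
  simpa [div_eq_inv_mul] using this

lemma B_lim : Tendsto (fun δ => B δ + Real.log (1 - Real.exp (-δ))) (nhdsWithin 0 (Ioi 0))
    (nhds 0) := by
  have h1 := (Z_lim.mul one_sub_exp_lim).log (by norm_num)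
  have h2 := B_sub_Z.add h1
  simp only [mul_one, Real.log_one, add_zero] at h2
  refine h2.congr' ?_
  filter_upwards [self_mem_nhdsWithin] with δ hδ
  have hδ : 0 < δ := hδ
  have h3 : 0 < 1 - Real.exp (-δ) := by
    have : Real.exp (-δ) < 1 := Real.exp_lt_one_iff.2 (by linarith)
    linarith
  have e : δ * Real.exp (Z δ) * ((1 - Real.exp (-δ)) / δ) = Real.exp (Z δ) * (1 - Real.exp (-δ)) := by
    field_simp
  rw [e, Real.log_mul (Real.exp_pos _).ne' h3.ne', Real.log_exp]
  ring

lemma S_eq : S = 0 := by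
  refine tendsto_nhds_unique (lim_one.congr' ?_) B_lim
  filter_upwards [self_mem_nhdsWithin] with δ hδ
  exact (app_one hδ).symm

lemma P_lim : Tendsto (fun T => P T - Real.log T) atTop (nhds Real.eulerMascheroniConstant) := by
  obtain ⟨C, hC, hD⟩ := D_bdd
  have h1 : Tendsto (fun T => D T / T) atTop (nhds 0) := by
    have hb : Tendsto (fun T : ℝ => C / T) atTop (nhds 0) := tendsto_const_nhds.div_atTop tendsto_id
    refine squeeze_zero_norm' ?_ hb
    filter_upwards [eventually_gt_atTop 0] with T hT
    rw [norm_div, Real.norm_of_nonneg hT.le]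
    gcongr
    exact hD T hT.le
  have h2 := lim_two
  rw [S_eq] at h2
  have h3 := Real.tendsto_harmonic_sub_log.comp (tendsto_nat_floor_atTop (α := ℝ))
  have h4 : Tendsto (fun T : ℝ => Real.log ((⌊T⌋₊ : ℝ) / T)) atTop (nhds 0) := by
    have := (tendsto_nat_floor_div_atTop (R := ℝ)).log one_ne_zero
    simpa using this
  have h5 := ((h1.add h2).add h3).add h4
  simp only [zero_add, add_zero] at h5
  refine h5.congr' ?_
  filter_upwards [eventually_ge_atTop 1] with T hT
  rw [← app_two (by linarith)]
  have : (⌊T⌋₊ : ℝ) ≠ 0 := by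
    have : 1 ≤ ⌊T⌋₊ := Nat.le_floor (by simpa using hT)
    positivity
  rw [Real.log_div this (by linarith)]
  simp only [Function.comp]
  ring

end MertensAux

/-- Mertens's third theorem: `∏_{p ≤ x} (1 - 1/p)⁻¹ ∼ e^γ · log x` as `x → ∞`,
stated as `(1/log x) · ∏_{p ≤ x} (1 - 1/p)⁻¹ → e^γ`. -/
theorem mertens_third :
    Tendsto
      (fun x : ℝ => (1 / Real.log x) *
        ∏ p ∈ Nat.primesBelow (⌊x⌋₊ + 1), (1 - 1 / (p : ℝ))⁻¹)
      atTop (nhds (Real.exp Real.eulerMascheroniConstant)) := by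
  have h := ((Real.continuous_exp.tendsto _).comp MertensAux.P_lim).comp Real.tendsto_log_atTop
  refine h.congr' ?_
  filter_upwards [eventually_gt_atTop 1] with x hx
  have hl : 0 < Real.log x := Real.log_pos hx
  simp only [Function.comp]
  rw [Real.exp_sub, Real.exp_log hl, MertensAux.P, Real.exp_log (by linarith), Real.exp_sum,
    div_eq_mul_one_div, mul_comm]
  congr 1
  refine Finset.prod_congr rfl fun p hp => ?_
  have h2 : (2 : ℝ) ≤ p := by exact_mod_cast (MertensAux.prime_of_LE hp).two_le
  have hy : 1 / (p : ℝ) ≤ 1 / 2 := by gcongr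
  rw [MertensAux.L, Real.exp_neg, Real.exp_log (by linarith)]
end
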